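/- Let Φ : M → N be a morphism of matroids M = (X, I) and N = (Y, J) with |X| = n, let ω : X → ℝ_{>0} be a positive weight function, and let k be an integer with 1 ≤ k < rk(M). Suppose B_ω(k) > 0. Then B_ω(k)² = (1 + 1/k)·(1 + 1/(n − k))·B_ω(k−1)·B_ω(k+1) if and only if: every subset of X of size k+1 is independent in M (equivalently girth(M) > k+1), the weight function ω is uniform, and g(Φ(S)) = rk(N) for every independent set S ∈ I with |S| = k−1. -/

import Mathlib

open scoped Classical BigOperators

noncomputable section

/-- A (finite) matroid given by its independence predicate: a nonempty hereditary
collection of independent sets satisfying the exchange property. -/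
def IsMatroid {Z : Type*} [DecidableEq Z] (Indep : Finset Z → Prop) : Prop :=
  (∃ S : Finset Z, Indep S) ∧
    (∀ S T : Finset Z, S ⊆ T → Indep T → Indep S) ∧
    (∀ S T : Finset Z, Indep S → Indep T → S.card < T.card →
      ∃ x ∈ T, x ∉ S ∧ Indep (insert x S))

/-- The rank function of a set system: the maximal size of an independent subset. -/
def rkOf {Z : Type*} [DecidableEq Z] (Indep : Finset Z → Prop) (S : Finset Z) : ℕ :=
  S.powerset.sup (fun A => if Indep A then A.card else 0)

variable {X Y : Type*} [Fintype X] [DecidableEq X] [Fintype Y] [DecidableEq Y]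

/-- `Φ : X → Y` is a morphism of matroids from `M = (X, IndepM)` to `N = (Y, IndepN)` if
`g(Φ(T)) - g(Φ(S)) ≤ f(T) - f(S)` for all `S ⊆ T ⊆ X`, where `f`, `g` are the rank
functions of `M` and `N`. -/
def IsMorphism (IndepM : Finset X → Prop) (IndepN : Finset Y → Prop) (Φ : X → Y) : Prop :=
  ∀ S T : Finset X, S ⊆ T →
    (rkOf IndepN (T.image Φ) : ℤ) - (rkOf IndepN (S.image Φ) : ℤ) ≤
      (rkOf IndepM T : ℤ) - (rkOf IndepM S : ℤ)

/-- A basis of the morphism `Φ`: an independent set of `M` whose image has full rank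
in `N`. -/
def IsPhiBasis (IndepM : Finset X → Prop) (IndepN : Finset Y → Prop) (Φ : X → Y)
    (S : Finset X) : Prop :=
  IndepM S ∧ rkOf IndepN (S.image Φ) = rkOf IndepN (Finset.univ : Finset Y)

/-- The weighted count `B_ω(k)` of bases of `Φ` of size `k`. -/
def Bw (IndepM : Finset X → Prop) (IndepN : Finset Y → Prop) (Φ : X → Y)
    (ω : X → ℝ) (k : ℕ) : ℝ :=
  ∑ S ∈ Finset.univ.filter (fun S : Finset X =>
      IsPhiBasis IndepM IndepN Φ S ∧ S.card = k),
    ∏ x ∈ S, ω x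

/-- The set of continuations of an independent set `S` in `M`. -/
def mCont (IndepM : Finset X → Prop) (S : Finset X) : Finset X :=
  Finset.univ.filter (fun x => x ∉ S ∧ IndepM (insert x S))

/-- The parallel class of `x ∈ Cnt(S)` in `M`. -/
def mParClass (IndepM : Finset X → Prop) (S : Finset X) (x : X) : Finset X :=
  (mCont IndepM S).filter (fun y => y = x ∨ ¬ IndepM (insert y (insert x S)))

/-- The set `Par(S)` of parallel classes of `S` in `M`. -/
def mParClasses (IndepM : Finset X → Prop) (S : Finset X) : Finset (Finset X) :=
  (mCont IndepM S).image (mParClass IndepM S)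

/-- The `k`-continuation number of the morphism `Φ`: the maximal number of parallel
classes of a basis of `Φ` of size `k`. -/
def contNumB (IndepM : Finset X → Prop) (IndepN : Finset Y → Prop) (Φ : X → Y)
    (k : ℕ) : ℕ :=
  (Finset.univ.filter (fun S : Finset X =>
      IsPhiBasis IndepM IndepN Φ S ∧ S.card = k)).sup
    (fun S => (mParClasses IndepM S).card)

/-!
Put `n = |X|`. The polynomial `∑ S, t ^ (n - |S|) ∏ x ∈ S, x`, over the bases `S` of `Φ`, is
Lorentzian: the Hessian of each of its iterated derivatives in nonnegative directions satisfies a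
reverse Cauchy–Schwarz inequality. For the derivatives of degree two this is a statement about the
parallel classes of a matroid. It passes from the `∂_p P` to `P`, for nonnegative directions `w`,
because it holds as soon as the Hessian `A` of `P` has connected support and satisfies
`A ≤ A D⁻¹ A`, where `D = diag (A w / w)`; by Euler's formula, that inequality is the sum over `p`
of those for the `∂_p P`.

Up to factorials, `B(k - 1)`, `B(k)` and `B(k + 1)` are the values at `(e_t, e_t)`, `(e_t, ω)` and
`(ω, ω)` of the Hessian of the derivative of order `n - 2 - (k - 1)` along the `t` axis and of
order `k - 1` along `ω`. Equality therefore puts a vector `e_t - λ ω` in its kernel. As the summands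
of this Hessian are all hyperbolic, the vector lies in the kernel of each of them, that is, of the
Hessians of the quadratic derivatives indexed by the sets `S` of size `k - 1`. If some pair outside
`S` extends `S` to a basis of `Φ`, this forces `λ ω = 1` outside `S`, makes `S` a basis, and makes
every pair outside `S` extend `S` to a basis; exchanging elements then reaches all the sets `S`.
-/

section Hyperbolic

variable {V : Type*} [AddCommGroup V] [Module ℝ V]

/-- A bilinear form satisfying the reverse Cauchy–Schwarz inequality against the vector `w`;
for `B w w > 0` this says that `w` spans a maximal positive definite subspace. -/
def IsHyperbolicAt (B : LinearMap.BilinForm ℝ V) (w : V) : Prop :=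
  ∀ v, B v v * B w w ≤ B v w ^ 2

theorem IsHyperbolicAt.of_nonpos_on_ker {B : LinearMap.BilinForm ℝ V} (hB : B.IsSymm) {w : V}
    (hw : 0 ≤ B w w) (l : V →ₗ[ℝ] ℝ) (hl : ∀ v, l v = 0 → B v v ≤ 0) : IsHyperbolicAt B w := by
  intro v
  rcases hw.eq_or_lt with hw | hw
  · rw [← hw, mul_zero]
    positivity
  have hlw : l w ≠ 0 := fun h ↦ (hl w h).not_gt hw
  have hproj := hl (l w • v - l v • w) (by simp [mul_comm])
  simp only [map_sub, map_smul, LinearMap.sub_apply, LinearMap.smul_apply, smul_eq_mul,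
    hB.eq w v] at hproj
  have hsq : 0 < l w ^ 2 := by positivity
  nlinarith [sq_nonneg (l w * B v w - l v * B w w)]

theorem IsHyperbolicAt.apply_eq_zero {B : LinearMap.BilinForm ℝ V} (hB : B.IsSymm) {w v : V}
    (h : IsHyperbolicAt B w) (hw : 0 < B w w) (hvw : B v w = 0) (hvv : B v v = 0) (u : V) :
    B v u = 0 := by
  have key (c : ℝ) : (B u u + 2 * c * B v u) * B w w ≤ B u w ^ 2 := by
    have := h (u + c • v)
    simp only [map_add, map_smul, LinearMap.add_apply, LinearMap.smul_apply, smul_eq_mul,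
      hB.eq u v, hvw, hvv] at this
    linarith
  by_contra hne
  have := key ((B u w ^ 2 + 1 - B u u * B w w) / (2 * B v u * B w w))
  field_simp at this
  linarith

theorem IsHyperbolicAt.apply_sub_smul_eq_zero {B : LinearMap.BilinForm ℝ V} (hB : B.IsSymm)
    {w v : V} (h : IsHyperbolicAt B w) (hw : 0 < B w w) (heq : B v w ^ 2 = B v v * B w w) (u : V) :
    B (v - (B v w / B w w) • w) u = 0 := by
  apply h.apply_eq_zero hB hw <;>
    simp only [map_sub, map_smul, LinearMap.sub_apply, LinearMap.smul_apply, smul_eq_mul, hB.eq w v]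
  · field_simp; ring
  · field_simp; linarith

theorem IsHyperbolicAt.apply_eq_zero_of_sum_apply_eq_zero {ι : Type*} [Fintype ι]
    {B : ι → LinearMap.BilinForm ℝ V} {w v : V} {c : ι → ℝ}
    (hB : ∀ i, (B i).IsSymm) (h : ∀ i, IsHyperbolicAt (B i) w) (hc : ∀ i, 0 ≤ c i)
    (hdeg : ∀ i, c i ≠ 0 → B i w w ≤ 0 → B i = 0) (hvw : ∀ i, B i v w = 0)
    (hsum : ∑ i, c i * B i v v = 0) {i : ι} (hi : c i ≠ 0) (u : V) : B i v u = 0 := by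
  have hterm (i : ι) : c i * B i v v ≤ 0 := by
    rcases eq_or_ne (c i) 0 with hi | hi
    · simp [hi]
    refine mul_nonpos_of_nonneg_of_nonpos (hc i) ?_
    rcases le_or_gt (B i w w) 0 with hw | hw
    · simp [hdeg i hi hw]
    · have := h i v
      rw [hvw i] at this
      nlinarith
  have hvv : B i v v = 0 := by
    have := (Finset.sum_eq_zero_iff_of_nonpos fun i _ ↦ hterm i).1 hsum i (Finset.mem_univ i)
    exact (mul_eq_zero.1 this).resolve_left hi
  rcases le_or_gt (B i w w) 0 with hw | hw
  · simp [hdeg i hi hw]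
  · exact (h i).apply_eq_zero (hB i) hw (hvw i) hvv u

end Hyperbolic

section LocalToGlobal

open Matrix

variable {Z : Type*} [Fintype Z]

theorem exists_mulVec_eq_of_dotProduct_eq_zero {m n K : Type*} [Fintype m] [Fintype n] [Field K]
    (M : Matrix m n K) (b : m → K) (h : ∀ y, y ᵥ* M = 0 → y ⬝ᵥ b = 0) : ∃ u, M *ᵥ u = b := by
  by_contra hb
  obtain ⟨f, hfb, hf⟩ := Submodule.exists_le_ker_of_notMem (p := LinearMap.range M.mulVecLin)
    (v := b) (by simpa using hb)
  obtain ⟨y, rfl⟩ := (dotProductEquiv K m).surjective f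
  refine hfb (h y (dotProduct_eq_zero _ fun u ↦ ?_))
  rw [← dotProduct_mulVec]
  exact hf (LinearMap.mem_range_self M.mulVecLin u)

/-- The graph whose edges are the nonzero entries of `A` has at most one component containing
an edge; stated through its locally constant functions. -/
def SupportConnected (A : Matrix Z Z ℝ) : Prop :=
  ∀ u : Z → ℝ, (∀ p q, A p q ≠ 0 → u p = u q) → ∃ c, ∀ p q, A p q ≠ 0 → u p = c

/-- The Laplacian of the weighted graph with adjacency matrix `A`, normalised so that it
annihilates `w` instead of the constant vector. -/
def weightedLaplacian (A : Matrix Z Z ℝ) (w : Z → ℝ) : Matrix Z Z ℝ :=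
  diagonal (fun p ↦ (A *ᵥ w) p / w p) - A

theorem weightedLaplacian_mulVec (A : Matrix Z Z ℝ) (w t : Z → ℝ) (p : Z) :
    (weightedLaplacian A w *ᵥ t) p = (A *ᵥ w) p / w p * t p - (A *ᵥ t) p := by
  simp [weightedLaplacian, sub_mulVec, mulVec_diagonal]

theorem two_mul_dotProduct_weightedLaplacian {A : Matrix Z Z ℝ} (hA : A.IsSymm) {w : Z → ℝ}
    (hw : ∀ p, 0 < w p) (t : Z → ℝ) :
    2 * (t ⬝ᵥ weightedLaplacian A w *ᵥ t) =
      ∑ p, ∑ q, A p q * (w p * w q * (t p / w p - t q / w q) ^ 2) := by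
  have hexp (p q : Z) : A p q * (w p * w q * (t p / w p - t q / w q) ^ 2) =
      (t p * (A p q * w q / w p * t p) - t p * (A p q * t q)) +
      (t q * (A q p * w p / w q * t q) - t q * (A q p * t p)) := by
    have hp := (hw p).ne'
    have hq := (hw q).ne'
    rw [hA.apply p q]
    field_simp
    ring
  have hrow (p : Z) : t p * (weightedLaplacian A w *ᵥ t) p =
      ∑ q, (t p * (A p q * w q / w p * t p) - t p * (A p q * t q)) := by
    rw [weightedLaplacian_mulVec, mul_sub, Finset.sum_sub_distrib, ← Finset.mul_sum,
      ← Finset.mul_sum, ← Finset.sum_mul, ← Finset.sum_div]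
    rfl
  simp only [hexp, Finset.sum_add_distrib]
  rw [Finset.sum_comm (f := fun p q ↦ t q * _ - _), ← two_mul]
  simp only [dotProduct, hrow]

theorem dotProduct_weightedLaplacian_nonneg {A : Matrix Z Z ℝ} (hA : A.IsSymm)
    (hA0 : ∀ p q, 0 ≤ A p q) {w : Z → ℝ} (hw : ∀ p, 0 < w p) (t : Z → ℝ) :
    0 ≤ t ⬝ᵥ weightedLaplacian A w *ᵥ t := by
  have hsum : 0 ≤ 2 * (t ⬝ᵥ weightedLaplacian A w *ᵥ t) := by
    rw [two_mul_dotProduct_weightedLaplacian hA hw]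
    exact Finset.sum_nonneg fun p _ ↦ Finset.sum_nonneg fun q _ ↦
      mul_nonneg (hA0 p q) (mul_nonneg (mul_pos (hw p) (hw q)).le (sq_nonneg _))
  linarith

theorem div_eq_div_of_weightedLaplacian_mulVec_eq_zero {A : Matrix Z Z ℝ} (hA : A.IsSymm)
    (hA0 : ∀ p q, 0 ≤ A p q) {w : Z → ℝ} (hw : ∀ p, 0 < w p) {t : Z → ℝ}
    (ht : weightedLaplacian A w *ᵥ t = 0) {p q : Z} (hpq : A p q ≠ 0) :
    t p / w p = t q / w q := by
  have hterm (p q : Z) : 0 ≤ A p q * (w p * w q * (t p / w p - t q / w q) ^ 2) :=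
    mul_nonneg (hA0 p q) (mul_nonneg (mul_pos (hw p) (hw q)).le (sq_nonneg _))
  have hsum := two_mul_dotProduct_weightedLaplacian hA hw t
  rw [ht, dotProduct_zero, mul_zero, eq_comm,
    Finset.sum_eq_zero_iff_of_nonneg fun p _ ↦ Finset.sum_nonneg fun q _ ↦ hterm p q] at hsum
  have hzero := (Finset.sum_eq_zero_iff_of_nonneg fun q _ ↦ hterm p q).1
    (hsum p (Finset.mem_univ p)) q (Finset.mem_univ q)
  have hwpq := (mul_pos (hw p) (hw q)).ne'
  simpa [hpq, hwpq, sub_eq_zero, (hw p).ne', (hw q).ne'] using hzero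

theorem apply_eq_zero_of_mulVec_eq_zero {A : Matrix Z Z ℝ} (hA0 : ∀ p q, 0 ≤ A p q) {w : Z → ℝ}
    (hw : ∀ p, 0 < w p) {p : Z} (hp : (A *ᵥ w) p = 0) (q : Z) : A p q = 0 := by
  have hterm := (Finset.sum_eq_zero_iff_of_nonneg fun q _ ↦ mul_nonneg (hA0 p q) (hw q).le).1 hp
  exact (mul_eq_zero.1 (hterm q (Finset.mem_univ q))).resolve_right (hw q).ne'

theorem exists_weightedLaplacian_mulVec_eq {A : Matrix Z Z ℝ} (hA : A.IsSymm)
    (hA0 : ∀ p q, 0 ≤ A p q) (hconn : SupportConnected A) {w : Z → ℝ} (hw : ∀ p, 0 < w p)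
    {v : Z → ℝ} (hv : v ⬝ᵥ A *ᵥ w = 0) :
    ∃ u, weightedLaplacian A w *ᵥ u = fun p ↦ (A *ᵥ w) p / w p * v p := by
  refine exists_mulVec_eq_of_dotProduct_eq_zero _ _ fun y hy ↦ ?_
  have hLsymm : (weightedLaplacian A w).IsSymm := (isSymm_diagonal _).sub hA
  rw [← mulVec_transpose, hLsymm.eq] at hy
  obtain ⟨c, hc⟩ := hconn _ fun p q ↦
    div_eq_div_of_weightedLaplacian_mulVec_eq_zero hA hA0 hw hy
  have hrow (p : Z) : y p * ((A *ᵥ w) p / w p * v p) = c * (v p * (A *ᵥ w) p) := by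
    by_cases hp : (A *ᵥ w) p = 0
    · simp [hp]
    obtain ⟨q, -, hq⟩ := Finset.exists_ne_zero_of_sum_ne_zero hp
    rw [← hc p q (left_ne_zero_of_mul hq)]
    ring
  simp only [dotProduct, hrow]
  rw [← Finset.mul_sum]
  exact mul_eq_zero_of_right c hv

theorem exists_mulVec_eq_mulVec_sub {A : Matrix Z Z ℝ} (hA : A.IsSymm)
    (hA0 : ∀ p q, 0 ≤ A p q) (hconn : SupportConnected A) {w : Z → ℝ} (hw : ∀ p, 0 < w p)
    {v : Z → ℝ} (hv : v ⬝ᵥ A *ᵥ w = 0) :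
    ∃ u t, A *ᵥ v = A *ᵥ (u - t) ∧ t = (fun p ↦ w p * (A *ᵥ u) p / (A *ᵥ w) p) ∧
      weightedLaplacian A w *ᵥ t = A *ᵥ u - A *ᵥ t := by
  obtain ⟨u, hu⟩ := exists_weightedLaplacian_mulVec_eq hA hA0 hconn hw hv
  refine ⟨u, _, ?_, rfl, ?_⟩
  · ext p
    refine Finset.sum_congr rfl fun q _ ↦ ?_
    by_cases hq : (A *ᵥ w) q = 0
    · have hpq : A p q = 0 := by
        rw [← hA.apply p q, apply_eq_zero_of_mulVec_eq_zero hA0 hw hq]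
      simp only [hpq, zero_mul]
    · have huq := congrFun hu q
      have hwq := (hw q).ne'
      rw [weightedLaplacian_mulVec] at huq
      congr 1
      simp only [Pi.sub_apply]
      field_simp at huq ⊢
      linarith
  · ext p
    rw [weightedLaplacian_mulVec, Pi.sub_apply]
    by_cases hp : (A *ᵥ w) p = 0
    · have hup : (A *ᵥ u) p = 0 := Finset.sum_eq_zero fun q _ ↦ by
        simp only [apply_eq_zero_of_mulVec_eq_zero hA0 hw hp, zero_mul]
      rw [hp, hup, zero_div, zero_mul]
    · have hwp := (hw p).ne'
      field_simp

theorem isHyperbolicAt_toBilin'_of_row_inequalities [DecidableEq Z] {A : Matrix Z Z ℝ}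
    (hA : A.IsSymm) (hA0 : ∀ p q, 0 ≤ A p q) (hconn : SupportConnected A) {w : Z → ℝ}
    (hw : ∀ p, 0 < w p)
    (hrow : ∀ u, u ⬝ᵥ A *ᵥ u ≤ ∑ p, w p * (A *ᵥ u) p ^ 2 / (A *ᵥ w) p) :
    IsHyperbolicAt A.toBilin' w := by
  have hsymm := isSymm_toBilin'_iff_isSymm.2 hA
  have hdot (x y : Z → ℝ) : x ⬝ᵥ A *ᵥ y = y ⬝ᵥ A *ᵥ x := by
    simpa only [toBilin'_apply'] using hsymm.eq x y
  refine .of_nonpos_on_ker hsymm ?_ (A.toBilin' w) fun v hv ↦ ?_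
  · rw [toBilin'_apply']
    exact Finset.sum_nonneg fun p _ ↦ mul_nonneg (hw p).le <|
      Finset.sum_nonneg fun q _ ↦ mul_nonneg (hA0 p q) (hw q).le
  rw [toBilin'_apply', hdot] at hv
  obtain ⟨u, t, hAv, ht, hLt⟩ := exists_mulVec_eq_mulVec_sub hA hA0 hconn hw hv
  have hu : u ⬝ᵥ A *ᵥ u ≤ t ⬝ᵥ A *ᵥ u :=
    (hrow u).trans_eq (Finset.sum_congr rfl fun p _ ↦ by rw [ht]; ring)
  have hperron : t ⬝ᵥ A *ᵥ t ≤ t ⬝ᵥ A *ᵥ u := by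
    have hlap := dotProduct_weightedLaplacian_nonneg hA hA0 hw t
    rwa [hLt, dotProduct_sub, sub_nonneg] at hlap
  calc A.toBilin' v v = (u - t) ⬝ᵥ A *ᵥ (u - t) := by
        rw [toBilin'_apply', hAv, hdot, hAv]
    _ = (u ⬝ᵥ A *ᵥ u - t ⬝ᵥ A *ᵥ u) + (t ⬝ᵥ A *ᵥ t - t ⬝ᵥ A *ᵥ u) := by
        rw [mulVec_sub, dotProduct_sub, sub_dotProduct, sub_dotProduct, hdot u t]
        ring
    _ ≤ 0 := by linarith

end LocalToGlobal

section IteratedDerivatives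

open Matrix

theorem mulVec_eq_zero_of_toBilin' {Z : Type*} [Fintype Z] [DecidableEq Z] {A : Matrix Z Z ℝ}
    (hA : A.IsSymm) {v : Z → ℝ} (h : ∀ u, A.toBilin' v u = 0) : A *ᵥ v = 0 := by
  ext p
  rw [← single_one_dotProduct p (A *ᵥ v), ← toBilin'_apply',
    ← (isSymm_toBilin'_iff_isSymm.2 hA).eq]
  exact h _

variable {Z Γ : Type*} [Fintype Z] [AddCommMonoid Γ] (e : Z → Γ) (c : Γ → ℝ)

/-- For a homogeneous polynomial `P` whose partial derivatives of order `deg P` are the constants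
`c γ`, this is the value of `(∑ p, w p * ∂_p) ^ r` applied to `∂^γ P`, where `deg P = r + |γ|`.
The vector `e p` is the exponent of the variable `p`. -/
def iterDeriv (w : Z → ℝ) : ℕ → Γ → ℝ
  | 0, γ => c γ
  | r + 1, γ => ∑ p, w p * iterDeriv w r (γ + e p)

/-- The Hessian matrix corresponding to `iterDeriv`. -/
def hess (w : Z → ℝ) (r : ℕ) (γ : Γ) : Matrix Z Z ℝ :=
  .of fun p q ↦ iterDeriv e c w r (γ + e p + e q)

variable {e c}

theorem iterDeriv_nonneg (hc : ∀ γ, 0 ≤ c γ) {w : Z → ℝ} (hw : ∀ p, 0 ≤ w p) (r : ℕ) (γ : Γ) :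
    0 ≤ iterDeriv e c w r γ := by
  induction r generalizing γ with
  | zero => exact hc γ
  | succ r ih => exact Finset.sum_nonneg fun p _ ↦ mul_nonneg (hw p) (ih _)

theorem continuous_iterDeriv (r : ℕ) (γ : Γ) : Continuous fun w ↦ iterDeriv e c w r γ := by
  induction r generalizing γ with
  | zero => exact continuous_const
  | succ r ih => exact continuous_finsetSum _ fun p _ ↦ (continuous_apply p).mul (ih _)

theorem hess_isSymm (w : Z → ℝ) (r : ℕ) (γ : Γ) : (hess e c w r γ).IsSymm :=
  IsSymm.ext fun p q ↦ congrArg (iterDeriv e c w r) (add_right_comm γ (e q) (e p))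

theorem hess_mulVec_self (w : Z → ℝ) (r : ℕ) (γ : Γ) (p : Z) :
    (hess e c w r γ *ᵥ w) p = iterDeriv e c w (r + 1) (γ + e p) :=
  Finset.sum_congr rfl fun _ _ ↦ mul_comm _ _

theorem dotProduct_hess_mulVec_self (w : Z → ℝ) (r : ℕ) (γ : Γ) :
    w ⬝ᵥ hess e c w r γ *ᵥ w = iterDeriv e c w (r + 2) γ :=
  Finset.sum_congr rfl fun p _ ↦ by rw [hess_mulVec_self]

theorem hess_succ (w : Z → ℝ) (r : ℕ) (γ : Γ) :
    hess e c w (r + 1) γ = ∑ i, w i • hess e c w r (γ + e i) := by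
  ext p q
  simp only [hess, iterDeriv, of_apply, Matrix.sum_apply, Matrix.smul_apply, smul_eq_mul]
  exact Finset.sum_congr rfl fun i _ ↦ by rw [add_right_comm _ (e q), add_right_comm γ (e p)]

theorem dotProduct_hess_succ_mulVec (w : Z → ℝ) (r : ℕ) (γ : Γ) (u v : Z → ℝ) :
    u ⬝ᵥ hess e c w (r + 1) γ *ᵥ v = ∑ i, w i * (u ⬝ᵥ hess e c w r (γ + e i) *ᵥ v) := by
  simp only [hess_succ, sum_mulVec, smul_mulVec, dotProduct_sum, dotProduct_smul, smul_eq_mul]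

theorem hess_succ_mulVec (w : Z → ℝ) (r : ℕ) (γ : Γ) (u : Z → ℝ) (p : Z) :
    (hess e c w (r + 1) γ *ᵥ u) p = u ⬝ᵥ hess e c w r (γ + e p) *ᵥ w := by
  calc (hess e c w (r + 1) γ *ᵥ u) p
      = ∑ q, u q * iterDeriv e c w (r + 1) (γ + e p + e q) :=
        Finset.sum_congr rfl fun q _ ↦ mul_comm _ _
    _ = u ⬝ᵥ hess e c w r (γ + e p) *ᵥ w :=
        Finset.sum_congr rfl fun q _ ↦ by rw [hess_mulVec_self]

theorem hess_eq_zero_of_iterDeriv_nonpos (hc : ∀ γ, 0 ≤ c γ) {w : Z → ℝ} (hw : ∀ p, 0 < w p)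
    {r : ℕ} {γ : Γ} (h : iterDeriv e c w (r + 2) γ ≤ 0) : hess e c w r γ = 0 := by
  have hnn := iterDeriv_nonneg (e := e) hc fun p ↦ (hw p).le
  have hzero {r : ℕ} {γ : Γ} (h : iterDeriv e c w (r + 1) γ = 0) (p : Z) :
      iterDeriv e c w r (γ + e p) = 0 := by
    have := (Finset.sum_eq_zero_iff_of_nonneg fun q _ ↦ mul_nonneg (hw q).le (hnn r _)).1 h p
    exact (mul_eq_zero.1 (this (Finset.mem_univ p))).resolve_left (hw p).ne'
  ext p q
  exact hzero (hzero (h.antisymm (hnn _ γ)) p) q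

theorem isHyperbolicAt_hess [DecidableEq Z] (deg : Γ →+ ℕ) (hdeg : ∀ p, deg (e p) = 1) {n : ℕ}
    (hc : ∀ γ, 0 ≤ c γ) {w : Z → ℝ} (hw : ∀ p, 0 < w p)
    (hbase : ∀ γ, deg γ + 2 = n → IsHyperbolicAt (hess e c w 0 γ).toBilin' w)
    (hconn : ∀ r γ, SupportConnected (hess e c w (r + 1) γ)) (r : ℕ) {γ : Γ}
    (hγ : deg γ + r + 2 = n) : IsHyperbolicAt (hess e c w r γ).toBilin' w := by
  induction r generalizing γ with
  | zero => exact hbase γ hγ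
  | succ r ih =>
    refine isHyperbolicAt_toBilin'_of_row_inequalities (hess_isSymm w _ γ)
      (fun _ _ ↦ iterDeriv_nonneg hc (fun p ↦ (hw p).le) _ _) (hconn r γ) hw fun u ↦ ?_
    rw [dotProduct_hess_succ_mulVec]
    refine Finset.sum_le_sum fun p _ ↦ ?_
    have hp := ih (γ := γ + e p) (by rw [map_add, hdeg]; omega) u
    simp only [toBilin'_apply'] at hp
    rw [hess_succ_mulVec, hess_mulVec_self, mul_div_assoc]
    refine mul_le_mul_of_nonneg_left ?_ (hw p).le
    rw [dotProduct_hess_mulVec_self] at hp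
    rcases le_or_gt (iterDeriv e c w (r + 2) (γ + e p)) 0 with h | h
    · simp [hess_eq_zero_of_iterDeriv_nonpos hc hw h]
    · rwa [le_div_iff₀ h]

theorem isHyperbolicAt_hess_of_nonneg [DecidableEq Z] {r : ℕ} {γ : Γ}
    (h : ∀ w : Z → ℝ, (∀ p, 0 < w p) → IsHyperbolicAt (hess e c w r γ).toBilin' w)
    {w : Z → ℝ} (hw : ∀ p, 0 ≤ w p) : IsHyperbolicAt (hess e c w r γ).toBilin' w := by
  intro v
  have hentry (p q : Z) : Continuous fun w ↦ hess e c w r γ p q := continuous_iterDeriv r _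
  simp only [IsHyperbolicAt, toBilin'_apply', dotProduct, mulVec] at h ⊢
  have hcont : Continuous fun ε : ℝ ↦ fun p ↦ w p + ε := by fun_prop
  have hlim {F : (Z → ℝ) → ℝ} (hF : Continuous F) :
      Filter.Tendsto (fun ε : ℝ ↦ F fun p ↦ w p + ε) (nhdsWithin 0 (Set.Ioi 0)) (nhds (F w)) := by
    simpa [Function.comp_def] using ((hF.comp hcont).tendsto 0).mono_left nhdsWithin_le_nhds
  refine le_of_tendsto_of_tendsto
    (hlim (F := fun w ↦ (∑ p, v p * ∑ q, hess e c w r γ p q * v q) *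
      ∑ p, w p * ∑ q, hess e c w r γ p q * w q) (by fun_prop))
    (hlim (F := fun w ↦ (∑ p, v p * ∑ q, hess e c w r γ p q * w q) ^ 2) (by fun_prop)) ?_
  filter_upwards [self_mem_nhdsWithin] with ε hε
  exact h _ (fun p ↦ add_pos_of_nonneg_of_pos (hw p) hε) v

theorem hess_mulVec_eq_zero_of_succ [DecidableEq Z] {w v : Z → ℝ} (hw : ∀ p, 0 ≤ w p) {r : ℕ}
    {γ : Γ}
    (hhyp : ∀ p, IsHyperbolicAt (hess e c w r (γ + e p)).toBilin' w)
    (hdeg : ∀ p, w p ≠ 0 → iterDeriv e c w (r + 2) (γ + e p) ≤ 0 → hess e c w r (γ + e p) = 0)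
    (hv : hess e c w (r + 1) γ *ᵥ v = 0) {p : Z} (hp : w p ≠ 0) :
    hess e c w r (γ + e p) *ᵥ v = 0 := by
  have hsymm (p : Z) := isSymm_toBilin'_iff_isSymm.2 (hess_isSymm (e := e) (c := c) w r (γ + e p))
  have hzero := IsHyperbolicAt.apply_eq_zero_of_sum_apply_eq_zero (v := v) hsymm hhyp hw
    (fun p hp h ↦ ?_) (fun p ↦ ?_) ?_ hp
  · exact mulVec_eq_zero_of_toBilin' (hess_isSymm w r _) hzero
  · rw [toBilin'_apply', dotProduct_hess_mulVec_self] at h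
    rw [hdeg p hp h, map_zero]
  · rw [toBilin'_apply', ← hess_succ_mulVec, hv, Pi.zero_apply]
  · simp only [toBilin'_apply']
    rw [← dotProduct_hess_succ_mulVec, hv, dotProduct_zero]

end IteratedDerivatives

section RankFunctions

variable {Z : Type*} [DecidableEq Z]

/-- A matroid rank function; submodularity is required only locally, which suffices. -/
structure IsRankFunction (f : Finset Z → ℕ) : Prop where
  empty : f ∅ = 0
  mono : Monotone f
  insert_le : ∀ x S, f (insert x S) ≤ f S + 1
  submodular : ∀ x y S, f (insert x (insert y S)) + f S ≤ f (insert x S) + f (insert y S)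

/-- The closure of `S` in the matroid with rank function `f`. -/
def rankClosure [Fintype Z] (f : Finset Z → ℕ) (S : Finset Z) : Finset Z :=
  {z | f (insert z S) = f S}

namespace IsRankFunction

variable {f : Finset Z → ℕ} {S : Finset Z} {x y z : Z}

theorem le_insert (hf : IsRankFunction f) (x : Z) (S : Finset Z) : f S ≤ f (insert x S) :=
  hf.mono (Finset.subset_insert x S)

theorem le_card (hf : IsRankFunction f) (S : Finset Z) : f S ≤ S.card := by
  induction S using Finset.induction_on with
  | empty => exact hf.empty.le
  | insert x S hx ih =>
    rw [Finset.card_insert_of_notMem hx]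
    exact (hf.insert_le x S).trans (Nat.succ_le_succ ih)

theorem insert_union_eq (hf : IsRankFunction f) (h : f (insert x S) = f S) (T : Finset Z) :
    f (insert x (T ∪ S)) = f (T ∪ S) := by
  induction T using Finset.induction_on with
  | empty => rwa [Finset.empty_union]
  | insert y T _ ih =>
    have hsub := hf.submodular x y (T ∪ S)
    have hle := hf.le_insert x (insert y (T ∪ S))
    rw [Finset.insert_union]
    omega

theorem exists_insert_eq_succ (hf : IsRankFunction f) {T : Finset Z} (h : f S < f T) :
    ∃ x ∈ T, f (insert x S) = f S + 1 := by
  by_contra! hne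
  have hunion (U : Finset Z) (hU : U ⊆ T) : f (U ∪ S) = f S := by
    induction U using Finset.induction_on with
    | empty => rw [Finset.empty_union]
    | insert x U _ ih =>
      obtain ⟨hx, hUT⟩ := Finset.insert_subset_iff.1 hU
      have hle := hf.insert_le x S
      have hge := hf.le_insert x S
      rw [Finset.insert_union, hf.insert_union_eq (by have := hne x hx; omega), ih hUT]
  exact h.not_ge (hunion T subset_rfl ▸ hf.mono Finset.subset_union_left)

theorem rankClosure_insert_subset [Fintype Z] (hf : IsRankFunction f)
    (h : f (insert x (insert y S)) ≤ f (insert y S)) :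
    rankClosure f (insert x S) ⊆ rankClosure f (insert y S) := by
  intro z hz
  simp only [rankClosure, Finset.mem_filter_univ] at hz ⊢
  have hsub := hf.submodular z y (insert x S)
  have hmono := hf.le_insert x (insert z (insert y S))
  have hge := hf.le_insert z (insert y S)
  rw [Finset.insert_comm y x S] at hsub
  rw [Finset.insert_comm x z] at hmono
  omega

theorem insert_insert_eq_add_two_iff [Fintype Z] (hf : IsRankFunction f)
    (hx : f (insert x S) = f S + 1) (hy : f (insert y S) = f S + 1) :
    f (insert x (insert y S)) = f S + 2 ↔
      rankClosure f (insert x S) ≠ rankClosure f (insert y S) := by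
  constructor
  · intro h heq
    have hmem : x ∈ rankClosure f (insert x S) := by simp [rankClosure]
    rw [heq, rankClosure, Finset.mem_filter_univ] at hmem
    omega
  · contrapose!
    intro h
    have hsub := hf.submodular x y S
    refine (hf.rankClosure_insert_subset ?_).antisymm (hf.rankClosure_insert_subset ?_)
    · omega
    · rw [Finset.insert_comm]
      omega

theorem comp_image {W : Type*} [DecidableEq W] (hf : IsRankFunction f) (Φ : W → Z) :
    IsRankFunction fun S ↦ f (S.image Φ) where
  empty := hf.empty
  mono _ _ h := hf.mono (Finset.image_subset_image h)
  insert_le x S := by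
    rw [Finset.image_insert]
    exact hf.insert_le _ _
  submodular x y S := by
    simp only [Finset.image_insert]
    exact hf.submodular _ _ _

end IsRankFunction

/-- The pair of rank functions of a matroid and of a quotient of it on the same ground set. -/
structure IsRankQuotient (f g : Finset Z → ℕ) : Prop where
  left : IsRankFunction f
  right : IsRankFunction g
  quot : ∀ ⦃S T⦄, S ⊆ T → g T + f S ≤ g S + f T

namespace IsRankQuotient

variable {f g : Finset Z → ℕ}

theorem quot_insert (h : IsRankQuotient f g) (x : Z) (S : Finset Z) :
    g (insert x S) + f S ≤ g S + f (insert x S) :=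
  h.quot (Finset.subset_insert x S)

theorem isRankFunction_min_add (h : IsRankQuotient f g) (c : ℕ) :
    IsRankFunction fun S ↦ min (f S) (g S + c) where
  empty := by rw [h.left.empty, Nat.zero_min]
  mono _ _ hST := min_le_min (h.left.mono hST) (Nat.add_le_add_right (h.right.mono hST) c)
  insert_le x S := by
    have hf := h.left.insert_le x S
    have hg := h.right.insert_le x S
    omega
  submodular x y S := by
    have hf := h.left.submodular x y S
    have hg := h.right.submodular x y S
    have hx := h.quot_insert x S
    have hy := h.quot_insert y S
    have hxy := h.quot_insert x (insert y S)
    have hyx := h.quot_insert y (insert x S)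
    rw [Finset.insert_comm] at hyx
    omega

end IsRankQuotient

namespace IsMatroid

open Matroid

variable {I : Finset Z → Prop}

/-- The matroid, in the sense of Mathlib, with independent sets `I`. -/
def toMatroid (hI : IsMatroid I) : Matroid Z :=
  (IndepMatroid.ofFinset Set.univ I (hI.1.elim fun S hS ↦ hI.2.1 _ S S.empty_subset hS)
    (fun _ _ hJ hIJ ↦ hI.2.1 _ _ hIJ hJ) (fun _ _ ↦ hI.2.2 _ _) fun _ _ ↦ Set.subset_univ _).matroid

theorem toMatroid_indep (hI : IsMatroid I) {S : Finset Z} : hI.toMatroid.Indep S ↔ I S := by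
  simp [toMatroid]

theorem eRk_toMatroid (hI : IsMatroid I) (S : Finset Z) : hI.toMatroid.eRk S = rkOf I S := by
  refine le_antisymm (eRk_le_iff.2 fun J hJS hJ ↦ ?_) (le_eRk_iff.2 ?_)
  · obtain ⟨J, rfl⟩ := (S.finite_toSet.subset hJS).exists_finset_coe
    have hle := Finset.le_sup (f := fun A ↦ if I A then A.card else 0)
      (Finset.mem_powerset.2 (Finset.coe_subset.1 hJS))
    simp only [if_pos (hI.toMatroid_indep.1 hJ)] at hle
    rw [Set.encard_coe_eq_coe_finsetCard]
    exact_mod_cast hle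
  · obtain ⟨J, hJS, hJ⟩ := Finset.exists_mem_eq_sup S.powerset ⟨∅, by simp⟩
      (fun A ↦ if I A then A.card else 0)
    rw [rkOf, hJ]
    split_ifs with hIJ
    · exact ⟨J, by simpa using hJS, hI.toMatroid_indep.2 hIJ, Set.encard_coe_eq_coe_finsetCard J⟩
    · exact ⟨∅, Set.empty_subset _, hI.toMatroid.empty_indep, Set.encard_empty⟩

theorem rkOf_eq_card_iff (hI : IsMatroid I) {S : Finset Z} : rkOf I S = S.card ↔ I S := by
  rw [← hI.toMatroid_indep, indep_iff_eRk_eq_encard_of_finite S.finite_toSet, hI.eRk_toMatroid,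
    Set.encard_coe_eq_coe_finsetCard, Nat.cast_inj]

theorem isRankFunction_rkOf (hI : IsMatroid I) : IsRankFunction (rkOf I) where
  empty := by
    simpa using (hI.eRk_toMatroid ∅).symm
  mono S T h := by
    have := hI.toMatroid.eRk_mono (Finset.coe_subset.2 h)
    simp only [hI.eRk_toMatroid] at this
    exact_mod_cast this
  insert_le x S := by
    have := hI.toMatroid.eRk_insert_le_add_one x S
    rw [← Finset.coe_insert, hI.eRk_toMatroid, hI.eRk_toMatroid] at this
    exact_mod_cast this
  submodular x y S := by
    have hsub := hI.toMatroid.eRk_submod ↑(insert x S) ↑(insert y S)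
    have hinter := hI.toMatroid.eRk_mono <| Finset.coe_subset.2 <|
      Finset.subset_inter (Finset.subset_insert x S) (Finset.subset_insert y S)
    have hunion : insert x S ∪ insert y S = insert x (insert y S) := by
      rw [Finset.insert_union, Finset.union_insert, Finset.union_self]
    rw [← Finset.coe_inter, ← Finset.coe_union, hunion] at hsub
    simp only [hI.eRk_toMatroid] at hsub hinter
    norm_cast at hsub hinter
    omega

end IsMatroid

theorem IsMorphism.isRankQuotient {W : Type*} [DecidableEq W] {I : Finset Z → Prop}
    {J : Finset W → Prop} {Φ : Z → W} (hΦ : IsMorphism I J Φ) (hI : IsMatroid I)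
    (hJ : IsMatroid J) :
    IsRankQuotient (rkOf I) fun S ↦ rkOf J (S.image Φ) where
  left := hI.isRankFunction_rkOf
  right := hJ.isRankFunction_rkOf.comp_image Φ
  quot S T hST := by
    have := hΦ S T hST
    omega

end RankFunctions

section GeneratingPolynomial

variable {Z : Type*}

/-- The exponents of the variables of the generating polynomial of bases: `none` stands for the
homogenizing variable and `some x` for the variable of `x`. Exponents are pairs in `ℕ × Multiset Z`
accordingly. -/
def varExponent : Option Z → ℕ × Multiset Z
  | none => (1, 0)
  | some x => (0, {x})

@[simp]
theorem add_varExponent_none (a : ℕ) (S : Multiset Z) : (a, S) + varExponent none = (a + 1, S) := by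
  rw [varExponent, Prod.mk_add_mk, add_zero]

@[simp]
theorem add_varExponent_some (a : ℕ) (S : Multiset Z) (x : Z) :
    (a, S) + varExponent (some x) = (a, x ::ₘ S) := by
  rw [varExponent, Prod.mk_add_mk, add_zero, add_comm S, Multiset.singleton_add]

variable [Fintype Z] [DecidableEq Z]

/-- The multiset `S` is an independent set without repetitions, and its quotient rank is at most `r`
short of full, so that `r` further elements may complete it to a basis of the quotient. -/
def IsPartialBasis (f g : Finset Z → ℕ) (r : ℕ) (S : Multiset Z) : Prop :=
  f S.toFinset = S.card ∧ g Finset.univ ≤ g S.toFinset + r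

namespace IsPartialBasis

variable {f g : Finset Z → ℕ} {r : ℕ} {x : Z} {S : Multiset Z}

theorem nodup (hf : IsRankFunction f) (hS : IsPartialBasis f g r S) : S.Nodup := by
  rw [← Multiset.toFinset_card_eq_card_iff_nodup]
  exact (Multiset.toFinset_card_le S).antisymm (hS.1 ▸ hf.le_card _)

theorem cons_iff (hf : IsRankFunction f) :
    IsPartialBasis f g r (x ::ₘ S) ↔ f S.toFinset = S.card ∧
      f (insert x S.toFinset) = f S.toFinset + 1 ∧
      g Finset.univ ≤ g (insert x S.toFinset) + r := by
  have hcard := (hf.le_card S.toFinset).trans S.toFinset_card_le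
  have hins := hf.insert_le x S.toFinset
  rw [IsPartialBasis, Multiset.toFinset_cons, Multiset.card_cons]
  omega

theorem of_cons (h : IsRankQuotient f g) (hS : IsPartialBasis f g r (x ::ₘ S)) :
    IsPartialBasis f g (r + 1) S := by
  obtain ⟨hS, -, hg⟩ := (cons_iff h.left).1 hS
  have := h.right.insert_le x S.toFinset
  exact ⟨hS, by omega⟩

theorem exists_cons (h : IsRankQuotient f g) (hS : IsPartialBasis f g (r + 1) S)
    (hcard : g Finset.univ ≤ g S.toFinset + r → S.card < f Finset.univ) :
    ∃ x, IsPartialBasis f g r (x ::ₘ S) := by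
  simp only [cons_iff h.left]
  obtain ⟨hf, hg⟩ := hS
  by_cases hr : g Finset.univ ≤ g S.toFinset + r
  · obtain ⟨x, -, hx⟩ := h.left.exists_insert_eq_succ (hf.trans_lt (hcard hr))
    have := h.right.le_insert x S.toFinset
    exact ⟨x, hf, hx, by omega⟩
  · obtain ⟨x, -, hx⟩ := h.right.exists_insert_eq_succ (S := S.toFinset) (T := Finset.univ)
      (by omega)
    have hfx := h.left.insert_le x S.toFinset
    have hquot := h.quot_insert x S.toFinset
    exact ⟨x, hf, by omega, by omega⟩

end IsPartialBasis

variable (f g : Finset Z → ℕ)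

/-- The partial derivatives of top order `n = |Z|` of the generating polynomial
`∑ S, t ^ (n - |S|) ∏ x ∈ S, x` of the bases `S`, in the form required by `iterDeriv`. -/
def basisCoeff (γ : ℕ × Multiset Z) : ℝ :=
  if IsPartialBasis f g 0 γ.2 then γ.1.factorial else 0

variable {f g}

theorem basisCoeff_nonneg (γ : ℕ × Multiset Z) : 0 ≤ basisCoeff f g γ := by
  rw [basisCoeff]
  positivity

theorem iterDeriv_basisCoeff_ne_zero_iff (h : IsRankQuotient f g) {w : Option Z → ℝ}
    (hw : ∀ p, 0 ≤ w p) (hwx : ∀ x, 0 < w (some x)) (r a : ℕ) (S : Multiset Z) :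
    iterDeriv varExponent (basisCoeff f g) w r (a, S) ≠ 0 ↔
      IsPartialBasis f g r S ∧ (0 < w none ∨ S.card + r ≤ f Finset.univ) := by
  induction r generalizing a S with
  | zero =>
    rw [iterDeriv, basisCoeff, ite_ne_right_iff]
    refine ⟨fun hS ↦ ⟨hS.1, .inr (hS.1.1 ▸ h.left.mono (Finset.subset_univ _))⟩, fun hS ↦
      ⟨hS.1, by positivity⟩⟩
  | succ r ih =>
    have hterm (p : Option Z) :=
      mul_nonneg (hw p) (iterDeriv_nonneg (e := varExponent) (basisCoeff_nonneg (f := f) (g := g))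
        hw r ((a, S) + varExponent p))
    rw [iterDeriv, Ne, Finset.sum_eq_zero_iff_of_nonneg fun p _ ↦ hterm p]
    simp only [Finset.mem_univ, true_imp_iff, Option.forall, mul_eq_zero, (hwx _).ne', false_or,
      add_varExponent_none, add_varExponent_some, not_and_or, not_or, not_forall]
    simp only [← ne_eq, ih, Multiset.card_cons, (hw none).lt_iff_ne']
    constructor
    · rintro (⟨ht, hS, -⟩ | ⟨x, hx, hcard⟩)
      · exact ⟨⟨hS.1, hS.2.trans (Nat.le_succ _)⟩, .inl ht⟩
      · exact ⟨hx.of_cons h, hcard.imp_right fun _ ↦ by omega⟩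
    · rintro ⟨hS, hcard⟩
      by_cases hnone : w none ≠ 0 ∧ g Finset.univ ≤ g S.toFinset + r
      · exact .inl ⟨hnone.1, ⟨hS.1, hnone.2⟩, .inl hnone.1⟩
      · obtain ⟨x, hx⟩ := hS.exists_cons h fun hr ↦ by
          have := hcard.resolve_left fun ht ↦ hnone ⟨ht, hr⟩
          omega
        exact .inr ⟨x, hx, hcard.imp_right fun _ ↦ by omega⟩

end GeneratingPolynomial

section ParallelClasses

variable {Z : Type*} [Fintype Z] [DecidableEq Z]

/-- The elements that are not loops in the contraction by `S` of the matroid with rank function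
`ρ`. -/
def nonloops (ρ : Finset Z → ℕ) (S : Finset Z) : Finset Z :=
  {x | ρ (insert x S) = ρ S + 1}

/-- The sum, over the parallel classes of the contraction by `S`, of the squares of the class sums
of `v`. -/
def parallelSq (ρ : Finset Z → ℕ) (S : Finset Z) (v : Z → ℝ) : ℝ :=
  ∑ K ∈ (nonloops ρ S).image fun x ↦ rankClosure ρ (insert x S),
    (∑ x ∈ nonloops ρ S with rankClosure ρ (insert x S) = K, v x) ^ 2

theorem mem_nonloops {ρ : Finset Z → ℕ} {S : Finset Z} {x : Z} :
    x ∈ nonloops ρ S ↔ ρ (insert x S) = ρ S + 1 :=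
  Finset.mem_filter_univ x

theorem nonloops_subset_compl (ρ : Finset Z → ℕ) (S : Finset Z) : nonloops ρ S ⊆ Sᶜ :=
  fun x hx ↦ Finset.mem_compl.2 fun hxS ↦ by
    rw [mem_nonloops, Finset.insert_eq_of_mem hxS] at hx
    omega

theorem card_nonloops_le (ρ : Finset Z → ℕ) (S : Finset Z) :
    (nonloops ρ S).card + S.card ≤ Fintype.card Z := by
  rw [← Finset.card_compl_add_card S]
  exact Nat.add_le_add_right (Finset.card_le_card (nonloops_subset_compl ρ S)) _

theorem IsRankFunction.insert_insert_eq_iff {ρ : Finset Z → ℕ} (hρ : IsRankFunction ρ)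
    {S : Finset Z} {x y : Z} : ρ (insert x (insert y S)) = ρ S + 2 ↔ x ∈ nonloops ρ S ∧
      y ∈ nonloops ρ S ∧ rankClosure ρ (insert x S) ≠ rankClosure ρ (insert y S) := by
  have hsub := hρ.submodular x y S
  have hx := hρ.insert_le x S
  have hy := hρ.insert_le y S
  constructor
  · intro h
    have hx : ρ (insert x S) = ρ S + 1 := by omega
    have hy : ρ (insert y S) = ρ S + 1 := by omega
    exact ⟨mem_nonloops.2 hx, mem_nonloops.2 hy, (hρ.insert_insert_eq_add_two_iff hx hy).1 h⟩
  · rintro ⟨hx, hy, h⟩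
    exact (hρ.insert_insert_eq_add_two_iff (mem_nonloops.1 hx) (mem_nonloops.1 hy)).2 h

theorem IsRankFunction.sum_sum_insert_insert_eq {ρ : Finset Z → ℕ} (hρ : IsRankFunction ρ)
    (S : Finset Z) (v : Z → ℝ) :
    (∑ x, ∑ y, if ρ (insert x (insert y S)) = ρ S + 2 then v x * v y else 0) =
      (∑ x ∈ nonloops ρ S, v x) ^ 2 - parallelSq ρ S v := by
  set κ := fun x ↦ rankClosure ρ (insert x S)
  have hparallel : parallelSq ρ S v =
      ∑ x ∈ nonloops ρ S, ∑ y ∈ nonloops ρ S, if κ x = κ y then v x * v y else 0 := by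
    rw [← Finset.sum_fiberwise_of_maps_to fun x ↦ Finset.mem_image_of_mem κ]
    refine Finset.sum_congr rfl fun K _ ↦ ?_
    rw [sq, Finset.sum_mul]
    refine Finset.sum_congr rfl fun x hx ↦ ?_
    rw [← (Finset.mem_filter.1 hx).2, Finset.mul_sum, Finset.sum_filter]
    simp only [κ, eq_comm]
  have hedge (x y : Z) : (if ρ (insert x (insert y S)) = ρ S + 2 then v x * v y else 0) =
      if x ∈ nonloops ρ S then if y ∈ nonloops ρ S then
        v x * v y - if κ x = κ y then v x * v y else 0 else 0 else 0 := by
    simp only [hρ.insert_insert_eq_iff, κ]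
    split_ifs <;> simp_all
  simp only [hparallel, sq, Finset.sum_mul_sum, hedge, Finset.sum_ite_irrel, Finset.sum_const_zero,
    Finset.sum_ite_mem, Finset.univ_inter, Finset.sum_sub_distrib]

theorem parallelSq_nonneg (ρ : Finset Z → ℕ) (S : Finset Z) (v : Z → ℝ) : 0 ≤ parallelSq ρ S v :=
  Finset.sum_nonneg fun _ _ ↦ sq_nonneg _

theorem sq_sum_nonloops_le (ρ : Finset Z → ℕ) (S : Finset Z) (v : Z → ℝ) :
    (∑ x ∈ nonloops ρ S, v x) ^ 2 ≤ (nonloops ρ S).card * parallelSq ρ S v := by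
  rw [← Finset.sum_fiberwise_of_maps_to fun x ↦
    Finset.mem_image_of_mem fun x ↦ rankClosure ρ (insert x S)]
  refine sq_sum_le_card_mul_sum_sq.trans ?_
  gcongr
  · exact Finset.card_image_le
  · exact le_rfl

theorem sq_sum_parallel_le (ρ : Finset Z → ℕ) (S : Finset Z) (v : Z → ℝ) {x : Z}
    (hx : x ∈ nonloops ρ S) :
    (∑ y ∈ nonloops ρ S with rankClosure ρ (insert y S) = rankClosure ρ (insert x S), v y) ^ 2 ≤
      parallelSq ρ S v :=
  Finset.single_le_sum (f := fun K ↦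
    (∑ y ∈ nonloops ρ S with rankClosure ρ (insert y S) = K, v y) ^ 2)
    (fun _ _ ↦ sq_nonneg _) (Finset.mem_image_of_mem _ hx)

end ParallelClasses

section GeneratingPolynomialHessian

variable {Z : Type*} [Fintype Z] [DecidableEq Z] {f g : Finset Z → ℕ}

namespace IsPartialBasis

variable {r : ℕ} {S : Multiset Z}

theorem cons_or_cons (h : IsRankQuotient f g) {x y : Z} (hS : IsPartialBasis f g (r + 1) S)
    (hxy : IsPartialBasis f g r (x ::ₘ y ::ₘ S)) :
    IsPartialBasis f g r (x ::ₘ S) ∨ IsPartialBasis f g r (y ::ₘ S) := by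
  obtain ⟨hfy, hfxy, hgxy⟩ := (cons_iff h.left).1 hxy
  rw [Multiset.toFinset_cons] at hfy hfxy hgxy
  rw [Multiset.card_cons] at hfy
  have hsubf := h.left.submodular x y S.toFinset
  have hsubg := h.right.submodular x y S.toFinset
  have hxle := h.left.insert_le x S.toFinset
  obtain ⟨hf, hg⟩ := hS
  rw [cons_iff h.left, cons_iff h.left]
  omega

-- The witness is a truncated Higgs lift of `g` towards `f`.
theorem exists_isRankFunction (h : IsRankQuotient f g) (hS : IsPartialBasis f g (r + 2) S) :
    ∃ ρ, IsRankFunction ρ ∧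
      (∀ x, IsPartialBasis f g (r + 1) (x ::ₘ S) ↔ x ∈ nonloops ρ S.toFinset) ∧
      ∀ x y, IsPartialBasis f g r (x ::ₘ y ::ₘ S) ↔
        ρ (insert x (insert y S.toFinset)) = ρ S.toFinset + 2 := by
  have hquot := h.quot (Finset.empty_subset S.toFinset)
  have hgempty := h.right.empty
  have hfempty := h.left.empty
  obtain ⟨hf, hg⟩ := hS
  refine ⟨_, h.isRankFunction_min_add (S.card + (r + 2) - g Finset.univ), fun x ↦ ?_,
    fun x y ↦ ?_⟩
  · have := h.left.insert_le x S.toFinset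
    rw [cons_iff h.left, mem_nonloops]
    omega
  · have hx := h.left.insert_le x (insert y S.toFinset)
    have hy := h.left.insert_le y S.toFinset
    rw [cons_iff h.left, Multiset.toFinset_cons, Multiset.card_cons]
    omega

end IsPartialBasis

theorem supportConnected_hess_basisCoeff (h : IsRankQuotient f g) {w : Option Z → ℝ}
    (hw : ∀ p, 0 < w p) (r : ℕ) (γ : ℕ × Multiset Z) :
    SupportConnected (hess varExponent (basisCoeff f g) w r γ) := by
  obtain ⟨a, S⟩ := γ
  have hne (a : ℕ) (S : Multiset Z) : iterDeriv varExponent (basisCoeff f g) w r (a, S) ≠ 0 ↔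
      IsPartialBasis f g r S := by
    simp [iterDeriv_basisCoeff_ne_zero_iff h (fun p ↦ (hw p).le) (fun _ ↦ hw _), hw none]
  intro u hu
  simp only [hess, Matrix.of_apply, Option.forall, add_varExponent_none, add_varExponent_some,
    hne] at hu ⊢
  obtain ⟨⟨-, htx⟩, hx⟩ := hu
  by_cases hS : IsPartialBasis f g (r + 1) S
  · refine ⟨u none, ⟨fun _ ↦ rfl, fun _ _ ↦ rfl⟩, fun x ↦ ⟨(hx x).1, fun y hxy ↦ ?_⟩⟩
    rcases hS.cons_or_cons h hxy with hy | hx'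
    · rw [(hx x).2 y hxy, htx y hy]
    · rw [htx x hx']
  have hcons (x : Z) : ¬ IsPartialBasis f g r (x ::ₘ S) := fun hx ↦ hS (hx.of_cons h)
  have hzero : ¬ IsPartialBasis f g r S := fun hr ↦ hS ⟨hr.1, hr.2.trans (Nat.le_succ _)⟩
  simp only [hzero, hcons, false_imp_iff, implies_true, true_and]
  by_cases hedge : ∃ x y, IsPartialBasis f g r (y ::ₘ x ::ₘ S)
  · obtain ⟨x₀, y₀, h₀⟩ := hedge
    obtain ⟨ρ, hρ, -, hρ₂⟩ := ((h₀.of_cons h).of_cons h).exists_isRankFunction h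
    simp only [hρ₂, hρ.insert_insert_eq_iff] at h₀ hx ⊢
    refine ⟨u (some x₀), fun x y hxy ↦ ?_⟩
    by_cases hκ : rankClosure ρ (insert x₀ S.toFinset) = rankClosure ρ (insert x S.toFinset)
    · rw [(hx x).2 y₀ ⟨h₀.1, hxy.2.1, hκ ▸ h₀.2.2⟩, (hx x₀).2 y₀ h₀]
    · exact (hx x).2 x₀ ⟨h₀.2.1, hxy.2.1, hκ⟩
  · push Not at hedge
    exact ⟨0, fun x y hxy ↦ absurd hxy (hedge x y)⟩

end GeneratingPolynomialHessian

section GeneratingPolynomialBase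

open Matrix

variable {Z : Type*} [Fintype Z] [DecidableEq Z] {f g : Finset Z → ℕ}

namespace IsPartialBasis

variable {r : ℕ} {S : Multiset Z}

theorem cons_cons (h : IsRankQuotient f g) {x y : Z} (hx : IsPartialBasis f g (r + 1) (x ::ₘ S))
    (hx' : ¬ IsPartialBasis f g r (x ::ₘ S)) (hy : IsPartialBasis f g r (y ::ₘ S)) :
    IsPartialBasis f g r (x ::ₘ y ::ₘ S) := by
  have hquot := h.quot_insert y (insert x S.toFinset)
  have hle := h.left.insert_le x (insert y S.toFinset)
  have hge := h.right.le_insert x (insert y S.toFinset)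
  rw [Finset.insert_comm] at hquot
  rw [cons_iff h.left] at hx hx' hy ⊢
  rw [Multiset.toFinset_cons, Multiset.card_cons]
  omega

theorem mono {s : ℕ} (hrs : r ≤ s) (hS : IsPartialBasis f g r S) : IsPartialBasis f g s S :=
  ⟨hS.1, hS.2.trans (Nat.add_le_add_left hrs _)⟩

theorem cons_iff_mem_nonloops (h : IsRankQuotient f g) (hS : IsPartialBasis f g r S) {x : Z} :
    IsPartialBasis f g r (x ::ₘ S) ↔ x ∈ nonloops f S.toFinset := by
  obtain ⟨hf, hg⟩ := hS
  have hle := h.right.le_insert x S.toFinset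
  rw [cons_iff h.left, mem_nonloops]
  omega

theorem cons_cons_iff (h : IsRankQuotient f g) (hS : IsPartialBasis f g r S) {x y : Z} :
    IsPartialBasis f g r (x ::ₘ y ::ₘ S) ↔
      f (insert x (insert y S.toFinset)) = f S.toFinset + 2 := by
  obtain ⟨hf, hg⟩ := hS
  have hx := h.left.insert_le x (insert y S.toFinset)
  have hy := h.left.insert_le y S.toFinset
  have hgx := h.right.le_insert x (insert y S.toFinset)
  have hgy := h.right.le_insert y S.toFinset
  rw [cons_iff h.left, Multiset.toFinset_cons, Multiset.card_cons]
  omega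

theorem card_nonloops_add_card_le (h : IsRankQuotient f g) (hS : IsPartialBasis f g r S)
    (ρ : Finset Z → ℕ) : (nonloops ρ S.toFinset).card + S.card ≤ Fintype.card Z := by
  rw [← Multiset.toFinset_card_of_nodup (hS.nodup h.left)]
  exact card_nonloops_le ρ S.toFinset

end IsPartialBasis

variable {w : Option Z → ℝ} {a : ℕ} {S : Multiset Z}

theorem iterDeriv_basisCoeff_zero_mul (s : ℝ) :
    iterDeriv varExponent (basisCoeff f g) w 0 (a, S) * s =
      a.factorial * if IsPartialBasis f g 0 S then s else 0 := by
  simp only [iterDeriv, basisCoeff, ite_mul, zero_mul, mul_ite, mul_zero]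

theorem hess_basisCoeff_zero_mulVec_none (v : Option Z → ℝ) :
    (hess varExponent (basisCoeff f g) w 0 (a, S) *ᵥ v) none =
      (a + 1).factorial * ((a + 2) * (if IsPartialBasis f g 0 S then v none else 0) +
        ∑ x with IsPartialBasis f g 0 (x ::ₘ S), v (some x)) := by
  simp only [mulVec, dotProduct, hess, of_apply, Fintype.sum_option, add_varExponent_none,
    add_varExponent_some, iterDeriv_basisCoeff_zero_mul, ← Finset.mul_sum, ← Finset.sum_filter]
  rw [Nat.factorial_succ (a + 1)]
  push_cast
  ring

theorem hess_basisCoeff_zero_mulVec_some (v : Option Z → ℝ) (y : Z) :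
    (hess varExponent (basisCoeff f g) w 0 (a, S) *ᵥ v) (some y) =
      a.factorial * ((a + 1) * (if IsPartialBasis f g 0 (y ::ₘ S) then v none else 0) +
        ∑ x with IsPartialBasis f g 0 (x ::ₘ y ::ₘ S), v (some x)) := by
  simp only [mulVec, dotProduct, hess, of_apply, Fintype.sum_option, add_varExponent_none,
    add_varExponent_some, iterDeriv_basisCoeff_zero_mul, ← Finset.mul_sum, ← Finset.sum_filter]
  rw [Nat.factorial_succ a]
  push_cast
  ring

theorem dotProduct_hess_basisCoeff_zero (v : Option Z → ℝ) :
    v ⬝ᵥ hess varExponent (basisCoeff f g) w 0 (a, S) *ᵥ v =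
      basisCoeff f g (a + 2, S) * v none ^ 2 +
      2 * (a + 1).factorial * v none * ∑ x with IsPartialBasis f g 0 (x ::ₘ S), v (some x) +
      a.factorial * ∑ x, ∑ y,
        if IsPartialBasis f g 0 (x ::ₘ y ::ₘ S) then v (some x) * v (some y) else 0 := by
  have hnone (y : Z) : v (some y) *
      ((a + 1) * if IsPartialBasis f g 0 (y ::ₘ S) then v none else 0) =
        (a + 1) * v none * if IsPartialBasis f g 0 (y ::ₘ S) then v (some y) else 0 := by
    split_ifs <;> ring
  have hsome (y : Z) : v (some y) * (∑ x, if IsPartialBasis f g 0 (x ::ₘ y ::ₘ S) then v (some x)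
      else 0) =
        ∑ x, if IsPartialBasis f g 0 (y ::ₘ x ::ₘ S) then v (some y) * v (some x) else 0 := by
    simp only [Finset.mul_sum, Multiset.cons_swap y, mul_ite, mul_zero]
  simp only [dotProduct, Fintype.sum_option, hess_basisCoeff_zero_mulVec_none,
    hess_basisCoeff_zero_mulVec_some, mul_left_comm _ (a.factorial : ℝ), mul_add (v _), hnone,
    hsome, Finset.sum_add_distrib, ← Finset.mul_sum, Finset.sum_filter, basisCoeff,
    Nat.factorial_succ]
  split_ifs <;> push_cast <;> ring

theorem dotProduct_hess_basisCoeff_nonpos_of_zero (h : IsRankQuotient f g)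
    (hS : IsPartialBasis f g 0 S) (hcard : a + S.card + 2 = Fintype.card Z) {v : Option Z → ℝ}
    (hv : (a + 2) * v none + ∑ x with IsPartialBasis f g 0 (x ::ₘ S), v (some x) = 0) :
    v ⬝ᵥ hess varExponent (basisCoeff f g) w 0 (a, S) *ᵥ v ≤ 0 := by
  have hN : ((nonloops f S.toFinset).card : ℝ) ≤ a + 2 := by
    have := hS.card_nonloops_add_card_le h f
    exact_mod_cast (by omega : _ ≤ a + 2)
  have hsq := sq_sum_nonloops_le f S.toFinset fun x ↦ v (some x)
  have hP := parallelSq_nonneg f S.toFinset fun x ↦ v (some x)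
  simp only [dotProduct_hess_basisCoeff_zero, hS.cons_cons_iff h, h.left.sum_sum_insert_insert_eq,
    basisCoeff, if_pos hS, hS.cons_iff_mem_nonloops h, Finset.filter_univ_mem,
    Nat.factorial_succ] at hv ⊢
  set σ := ∑ x ∈ nonloops f S.toFinset, v (some x)
  set P := parallelSq f S.toFinset fun x ↦ v (some x)
  have hσ : σ = -((a + 2) * v none) := by linarith
  rw [hσ] at hsq ⊢
  have hPle : (a + 2) * v none ^ 2 ≤ P := by nlinarith
  push_cast
  have : (a.factorial : ℝ) * ((a + 2) * v none ^ 2 - P) ≤ 0 :=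
    mul_nonpos_of_nonneg_of_nonpos (by positivity) (by linarith)
  linarith

theorem dotProduct_hess_basisCoeff_nonpos_of_one (h : IsRankQuotient f g)
    (hS : IsPartialBasis f g 1 S) (hS₀ : ¬ IsPartialBasis f g 0 S) {v : Option Z → ℝ}
    (hv : ∑ x with IsPartialBasis f g 0 (x ::ₘ S), v (some x) = 0) :
    v ⬝ᵥ hess varExponent (basisCoeff f g) w 0 (a, S) *ᵥ v ≤ 0 := by
  obtain ⟨ρ, hρ, hρ₁, hρ₂⟩ := (hS.mono one_le_two).exists_isRankFunction h
  have hsplit := Finset.sum_filter_add_sum_filter_not (nonloops ρ S.toFinset)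
    (fun x ↦ IsPartialBasis f g 0 (x ::ₘ S)) fun x ↦ v (some x)
  have hU : (nonloops ρ S.toFinset).filter (fun x ↦ IsPartialBasis f g 0 (x ::ₘ S)) =
      Finset.univ.filter fun x ↦ IsPartialBasis f g 0 (x ::ₘ S) := by
    ext x
    simpa [← hρ₁] using IsPartialBasis.mono zero_le_one
  rw [hU, hv, zero_add] at hsplit
  rw [dotProduct_hess_basisCoeff_zero, basisCoeff, if_neg hS₀, hv]
  simp only [hρ₂, hρ.sum_sum_insert_insert_eq, zero_mul, mul_zero, zero_add]
  refine mul_nonpos_of_nonneg_of_nonpos (by positivity) (sub_nonpos.2 ?_)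
  rw [← hsplit]
  rcases Finset.eq_empty_or_nonempty
    ((nonloops ρ S.toFinset).filter fun x ↦ ¬ IsPartialBasis f g 0 (x ::ₘ S)) with hN | ⟨x, hx⟩
  · rw [hN, Finset.sum_empty, sq, zero_mul]
    exact parallelSq_nonneg ..
  · obtain ⟨hxN, hx₀⟩ := Finset.mem_filter.1 hx
    have hclass (y : Z) (hy : y ∈ nonloops ρ S.toFinset) : ¬ IsPartialBasis f g 0 (y ::ₘ S) ↔
        rankClosure ρ (insert y S.toFinset) = rankClosure ρ (insert x S.toFinset) := by
      have hxy : IsPartialBasis f g 0 (y ::ₘ S) ↔ IsPartialBasis f g 0 (y ::ₘ x ::ₘ S) :=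
        ⟨fun hy ↦ Multiset.cons_swap x y S ▸ ((hρ₁ x).2 hxN).cons_cons h hx₀ hy,
          fun hxy ↦ (hS.cons_or_cons h hxy).resolve_right hx₀⟩
      rw [hxy, hρ₂, hρ.insert_insert_eq_iff, not_and_or, not_and_or, not_ne_iff]
      simp only [hy, hxN, not_true, false_or]
    rw [Finset.filter_congr hclass]
    exact sq_sum_parallel_le ρ S.toFinset (fun x ↦ v (some x)) hxN

theorem dotProduct_hess_basisCoeff_nonpos_of_two (h : IsRankQuotient f g)
    (hS : IsPartialBasis f g 2 S) (hS₁ : ¬ IsPartialBasis f g 1 S) {v : Option Z → ℝ}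
    (hv : ∑ x with IsPartialBasis f g 1 (x ::ₘ S), v (some x) = 0) :
    v ⬝ᵥ hess varExponent (basisCoeff f g) w 0 (a, S) *ᵥ v ≤ 0 := by
  obtain ⟨ρ, hρ, hρ₁, hρ₂⟩ := hS.exists_isRankFunction h
  have hnone (x : Z) : ¬ IsPartialBasis f g 0 (x ::ₘ S) := fun hx ↦ hS₁ (hx.of_cons h)
  have hS₀ : ¬ IsPartialBasis f g 0 S := fun hS ↦ hS₁ (hS.mono zero_le_one)
  simp only [hρ₁, Finset.filter_univ_mem] at hv
  simp only [dotProduct_hess_basisCoeff_zero, basisCoeff, if_neg hS₀, hnone, hρ₂,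
    hρ.sum_sum_insert_insert_eq, hv, Finset.filter_false, Finset.sum_empty]
  have := parallelSq_nonneg ρ S.toFinset fun x ↦ v (some x)
  have : 0 ≤ (a.factorial : ℝ) * parallelSq ρ S.toFinset fun x ↦ v (some x) := by positivity
  linarith

theorem isHyperbolicAt_hess_basisCoeff_zero (h : IsRankQuotient f g) (hw : ∀ p, 0 ≤ w p)
    (hcard : a + S.card + 2 = Fintype.card Z) :
    IsHyperbolicAt (hess varExponent (basisCoeff f g) w 0 (a, S)).toBilin' w := by
  suffices ∃ l : (Option Z → ℝ) →ₗ[ℝ] ℝ, ∀ v, l v = 0 →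
      v ⬝ᵥ hess varExponent (basisCoeff f g) w 0 (a, S) *ᵥ v ≤ 0 by
    obtain ⟨l, hl⟩ := this
    refine .of_nonpos_on_ker (Matrix.isSymm_toBilin'_iff_isSymm.2 (hess_isSymm ..)) ?_ l ?_
    · rw [Matrix.toBilin'_apply', dotProduct_hess_mulVec_self]
      exact iterDeriv_nonneg basisCoeff_nonneg hw _ _
    · simpa only [Matrix.toBilin'_apply'] using hl
  let proj := LinearMap.proj (R := ℝ) (φ := fun _ : Option Z ↦ ℝ)
  by_cases hS₀ : IsPartialBasis f g 0 S
  · exact ⟨(a + 2 : ℝ) • proj none + ∑ x with IsPartialBasis f g 0 (x ::ₘ S), proj (some x),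
      fun v hv ↦ dotProduct_hess_basisCoeff_nonpos_of_zero h hS₀ hcard (by simpa [proj] using hv)⟩
  by_cases hS₁ : IsPartialBasis f g 1 S
  · exact ⟨∑ x with IsPartialBasis f g 0 (x ::ₘ S), proj (some x),
      fun v hv ↦ dotProduct_hess_basisCoeff_nonpos_of_one h hS₁ hS₀ (by simpa [proj] using hv)⟩
  by_cases hS₂ : IsPartialBasis f g 2 S
  · exact ⟨∑ x with IsPartialBasis f g 1 (x ::ₘ S), proj (some x),
      fun v hv ↦ dotProduct_hess_basisCoeff_nonpos_of_two h hS₂ hS₁ (by simpa [proj] using hv)⟩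
  · refine ⟨0, fun v _ ↦ ?_⟩
    have hnone (x : Z) : ¬ IsPartialBasis f g 0 (x ::ₘ S) := fun hx ↦ hS₁ (hx.of_cons h)
    have hsome (x y : Z) : ¬ IsPartialBasis f g 0 (x ::ₘ y ::ₘ S) :=
      fun hxy ↦ hS₂ ((hxy.of_cons h).of_cons h)
    simp [dotProduct_hess_basisCoeff_zero, basisCoeff, hS₀, hnone, hsome]

theorem isHyperbolicAt_hess_basisCoeff (h : IsRankQuotient f g) (hw : ∀ p, 0 ≤ w p) (r : ℕ)
    (hcard : a + S.card + r + 2 = Fintype.card Z) :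
    IsHyperbolicAt (hess varExponent (basisCoeff f g) w r (a, S)).toBilin' w := by
  refine isHyperbolicAt_hess_of_nonneg (fun w hw ↦ ?_) hw
  let deg : ℕ × Multiset Z →+ ℕ := .coprod (.id ℕ) Multiset.cardHom
  have hdeg (γ : ℕ × Multiset Z) : deg γ = γ.1 + γ.2.card := rfl
  refine isHyperbolicAt_hess deg (fun p ↦ ?_) basisCoeff_nonneg hw (fun γ hγ ↦ ?_)
    (fun r γ ↦ supportConnected_hess_basisCoeff h hw (r + 1) γ) r (γ := (a, S))
    (n := Fintype.card Z) ?_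
  · cases p <;> simp [hdeg, varExponent]
  · exact isHyperbolicAt_hess_basisCoeff_zero h (fun p ↦ (hw p).le) (hdeg γ ▸ hγ)
  · rw [hdeg, hcard]

end GeneratingPolynomialBase

section Rigidity

open Matrix

variable {Z : Type*} [DecidableEq Z]

theorem of_card_eq_of_exchange {P : Finset Z → Prop}
    (hexch : ∀ S, P S → ∀ x ∈ S, ∀ y ∉ S, P (insert y (S.erase x))) {S T : Finset Z}
    (hcard : S.card = T.card) (hS : P S) : P T := by
  induction hn : (T \ S).card generalizing S with
  | zero =>
    have hTS := Finset.sdiff_eq_empty_iff_subset.1 (Finset.card_eq_zero.1 hn)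
    rwa [Finset.eq_of_subset_of_card_le hTS hcard.le]
  | succ n ih =>
    have hST : (S \ T).card = n + 1 := by
      rw [← hn, Finset.card_sdiff_comm hcard]
    obtain ⟨y, hy⟩ := Finset.card_pos.1 (n.succ_pos.trans_eq hn.symm)
    obtain ⟨x, hx⟩ := Finset.card_pos.1 (n.succ_pos.trans_eq hST.symm)
    rw [Finset.mem_sdiff] at hx hy
    refine ih ?_ (hexch S hS x hx.1 y hy.2) ?_
    · rw [Finset.card_insert_of_notMem fun h ↦ hy.2 (Finset.mem_of_mem_erase h),
        Finset.card_erase_add_one hx.1, hcard]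
    · have : T \ insert y (S.erase x) = (T \ S).erase y := by
        ext z
        have : z ∈ T → z ≠ x := fun hz hzx ↦ hx.2 (hzx ▸ hz)
        simp only [Finset.mem_sdiff, Finset.mem_insert, Finset.mem_erase]
        tauto
      rw [this, Finset.card_erase_of_mem (Finset.mem_sdiff.2 hy), hn, Nat.add_sub_cancel]

/-- The point at which the Hessians of the generating polynomial are compared: `0` for the
homogenizing variable, so that only bases of one size contribute, and `ω x` for the variable of
`x`. -/
def evalPoint {Z : Type*} (ω : Z → ℝ) (p : Option Z) : ℝ :=
  p.elim 0 ω

theorem evalPoint_nonneg {Z : Type*} {ω : Z → ℝ} (hω : ∀ x, 0 ≤ ω x) (p : Option Z) :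
    0 ≤ evalPoint ω p := by
  cases p
  exacts [le_rfl, hω _]

variable [Fintype Z] {f g : Finset Z → ℕ}

theorem hess_basisCoeff_eq_zero_of_nonpos (h : IsRankQuotient f g) {w : Option Z → ℝ}
    (hw : ∀ p, 0 ≤ w p) (hwx : ∀ x, 0 < w (some x)) {r a : ℕ} {S : Multiset Z}
    (hrank : S.card + r + 2 ≤ f Finset.univ)
    (hS : iterDeriv varExponent (basisCoeff f g) w (r + 2) (a, S) ≤ 0) :
    hess varExponent (basisCoeff f g) w r (a, S) = 0 := by
  have hne := iterDeriv_basisCoeff_ne_zero_iff h hw hwx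
  have hS' : ¬ IsPartialBasis f g (r + 2) S := fun hS' ↦
    (hne (r + 2) a S).2 ⟨hS', .inr hrank⟩ (hS.antisymm (iterDeriv_nonneg basisCoeff_nonneg hw _ _))
  ext p q
  by_contra hpq
  simp only [hess, of_apply, Matrix.zero_apply] at hpq
  refine hS' ?_
  cases p <;> cases q <;>
    simp only [add_varExponent_none, add_varExponent_some] at hpq <;>
    replace hpq := ((hne ..).1 hpq).1
  · exact hpq.mono (Nat.le_add_right r 2)
  · exact (hpq.of_cons h).mono (Nat.le_succ _)
  · exact (hpq.of_cons h).mono (Nat.le_succ _)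
  · exact (hpq.of_cons h).of_cons h

theorem hess_basisCoeff_mulVec_eq_zero (h : IsRankQuotient f g) {ω : Z → ℝ} (hω : ∀ x, 0 < ω x)
    {v : Option Z → ℝ} {r a : ℕ} {S : Multiset Z} (hcard : a + S.card + r + 2 = Fintype.card Z)
    (hrank : S.card + r + 2 ≤ f Finset.univ)
    (hv : hess varExponent (basisCoeff f g) (evalPoint ω) (S.card + r) (a, 0) *ᵥ v = 0) :
    hess varExponent (basisCoeff f g) (evalPoint ω) r (a, S) *ᵥ v = 0 := by
  have hw := evalPoint_nonneg fun x ↦ (hω x).le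
  induction S using Multiset.induction_on generalizing r with
  | empty => rwa [Multiset.card_zero, zero_add] at hv
  | cons x S ih =>
    rw [Multiset.card_cons] at hcard hrank hv
    rw [← add_varExponent_some]
    refine hess_mulVec_eq_zero_of_succ hw (fun p ↦ ?_) (fun p hp hS ↦ ?_)
      (ih (by omega) (by omega) (by rwa [add_right_comm, add_assoc] at hv)) (hω x).ne'
    · refine isHyperbolicAt_hess_basisCoeff h hw r ?_
      cases p <;> simp [varExponent] <;> omega
    · cases p with
      | none => exact absurd rfl hp
      | some y =>
        rw [add_varExponent_some] at hS ⊢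
        exact hess_basisCoeff_eq_zero_of_nonpos h hw hω (by simpa) hS

theorem injOn_of_sum_fiber_eq_one {ι κ : Type*} [DecidableEq κ] {s : Finset ι} {φ : ι → κ}
    {m : ι → ℝ} (hfiber : ∀ y ∈ s, ∑ x ∈ s with φ x = φ y, m x = 1)
    (hcard : s.card ≤ ∑ x ∈ s, m x) : Set.InjOn φ s := by
  rw [← Finset.card_image_iff]
  refine Finset.card_image_le.antisymm ?_
  rw [← Finset.sum_fiberwise_of_maps_to fun x ↦ Finset.mem_image_of_mem φ] at hcard
  have hone : ∀ K ∈ s.image φ, ∑ x ∈ s with φ x = K, m x = 1 := by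
    simpa only [Finset.forall_mem_image] using hfiber
  rw [Finset.sum_congr rfl hone, Finset.sum_const, nsmul_one] at hcard
  exact_mod_cast hcard

theorem IsRankFunction.eq_one_and_insert_insert_eq_add_two {ρ : Finset Z → ℕ}
    (hρ : IsRankFunction ρ) {S : Finset Z} {m : Z → ℝ} {a : ℕ}
    (hcard : a + S.card + 2 = Fintype.card Z)
    (hsum : ∑ x ∈ nonloops ρ S, m x = a + 2)
    (hrow : ∀ y ∈ nonloops ρ S, ∑ x with ρ (insert x (insert y S)) = ρ S + 2, m x = a + 1) :
    ∀ x ∉ S, m x = 1 ∧ ∀ y ∉ S, x ≠ y → ρ (insert x (insert y S)) = ρ S + 2 := by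
  set κ := fun x ↦ rankClosure ρ (insert x S)
  have hfiber : ∀ y ∈ nonloops ρ S, ∑ x ∈ nonloops ρ S with κ x = κ y, m x = 1 := fun y hy ↦ by
    have hsplit := Finset.sum_filter_add_sum_filter_not (nonloops ρ S) (κ · = κ y) m
    have hrow := hrow y hy
    simp only [hρ.insert_insert_eq_iff, hy, true_and, ← Finset.filter_filter,
      Finset.filter_univ_mem] at hrow
    linarith
  have hle : (nonloops ρ S).card ≤ a + 2 := by
    have := card_nonloops_le ρ S
    omega
  have hinj : Set.InjOn κ (nonloops ρ S) :=
    injOn_of_sum_fiber_eq_one hfiber (by rw [hsum]; exact_mod_cast hle)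
  have hone : ∀ y ∈ nonloops ρ S, m y = 1 := fun y hy ↦ by
    have hclass : {x ∈ nonloops ρ S | κ x = κ y} = {y} := Finset.eq_singleton_iff_unique_mem.2
      ⟨Finset.mem_filter.2 ⟨hy, rfl⟩, fun x hx ↦
        hinj (Finset.mem_filter.1 hx).1 hy (Finset.mem_filter.1 hx).2⟩
    rw [← hfiber y hy, hclass, Finset.sum_singleton]
  have hge : a + 2 ≤ (nonloops ρ S).card := by
    rw [Finset.sum_congr rfl hone, Finset.sum_const, nsmul_one] at hsum
    exact_mod_cast hsum.ge
  have hN : ∀ x ∉ S, x ∈ nonloops ρ S := fun x hx ↦ by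
    have hcompl := Finset.card_compl_add_card S
    rwa [Finset.eq_of_subset_of_card_le (nonloops_subset_compl ρ S) (by omega), Finset.mem_compl]
  exact fun x hx ↦ ⟨hone x (hN x hx), fun y hy hxy ↦ hρ.insert_insert_eq_iff.2
    ⟨hN x hx, hN y hy, hinj.ne (hN x hx) (hN y hy) hxy⟩⟩

theorem isPartialBasis_and_eq_neg_one_of_mulVec_eq_zero (h : IsRankQuotient f g)
    {w v : Option Z → ℝ} {a : ℕ} {S : Multiset Z} (hcard : a + S.card + 2 = Fintype.card Z)
    (hv : hess varExponent (basisCoeff f g) w 0 (a, S) *ᵥ v = 0) (hv₁ : v none = 1)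
    (hvneg : ∀ x, v (some x) < 0) {x₀ y₀ : Z} (h₀ : IsPartialBasis f g 0 (x₀ ::ₘ y₀ ::ₘ S)) :
    IsPartialBasis f g 0 S ∧ ∀ x ∉ S, v (some x) = -1 ∧
      ∀ y ∉ S, x ≠ y → IsPartialBasis f g 0 (x ::ₘ y ::ₘ S) := by
  have hnone : ∑ x with IsPartialBasis f g 0 (x ::ₘ S), -v (some x) =
      (a + 2) * if IsPartialBasis f g 0 S then (1 : ℝ) else 0 := by
    have := congrFun hv none
    rw [hess_basisCoeff_zero_mulVec_none, hv₁, Pi.zero_apply,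
      mul_eq_zero_iff_left (by positivity)] at this
    rw [Finset.sum_neg_distrib]
    linarith
  have hsome (y : Z) : ∑ x with IsPartialBasis f g 0 (x ::ₘ y ::ₘ S), -v (some x) =
      (a + 1) * if IsPartialBasis f g 0 (y ::ₘ S) then (1 : ℝ) else 0 := by
    have := congrFun hv (some y)
    rw [hess_basisCoeff_zero_mulVec_some, hv₁, Pi.zero_apply,
      mul_eq_zero_iff_left (by positivity)] at this
    rw [Finset.sum_neg_distrib]
    linarith
  have hpos {R : Multiset Z} {x : Z} (hx : IsPartialBasis f g 0 (x ::ₘ R)) :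
      0 < ∑ x with IsPartialBasis f g 0 (x ::ₘ R), -v (some x) :=
    Finset.sum_pos (fun x _ ↦ neg_pos.2 (hvneg x)) ⟨x, (Finset.mem_filter_univ x).2 hx⟩
  have hy₀ : IsPartialBasis f g 0 (y₀ ::ₘ S) := by
    by_contra hy₀
    have := hpos h₀
    rw [hsome, if_neg hy₀, mul_zero] at this
    exact this.false
  have hS : IsPartialBasis f g 0 S := by
    by_contra hS
    have := hpos hy₀
    rw [hnone, if_neg hS, mul_zero] at this
    exact this.false
  rw [if_pos hS, mul_one] at hnone
  simp only [hS.cons_iff_mem_nonloops h, hS.cons_cons_iff h, Finset.filter_univ_mem] at hnone hsome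
  have hrig := h.left.eq_one_and_insert_insert_eq_add_two (S := S.toFinset)
    (m := fun x ↦ -v (some x)) (a := a)
    (by rwa [Multiset.toFinset_card_of_nodup (hS.nodup h.left)]) hnone
    fun y hy ↦ by rw [hsome, if_pos hy, mul_one]
  simpa only [hS, true_and, hS.cons_cons_iff h, Multiset.mem_toFinset, neg_eq_iff_eq_neg] using hrig

end Rigidity

section GlobalRigidity

open Matrix

variable {Z : Type*} [DecidableEq Z] [Fintype Z] {f g : Finset Z → ℕ} {v w : Option Z → ℝ} {a j : ℕ}

theorem isPartialBasis_of_mulVec_eq_zero (h : IsRankQuotient f g)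
    (hcard : a + j + 2 = Fintype.card Z) (hv : ∀ S : Multiset Z, S.card = j →
      hess varExponent (basisCoeff f g) w 0 (a, S) *ᵥ v = 0)
    (hv₁ : v none = 1) (hvneg : ∀ x, v (some x) < 0) {T₀ T : Finset Z} (hT₀ : T₀.card = j + 2)
    (hPB : IsPartialBasis f g 0 T₀.val) (hT : T.card = j + 2) : IsPartialBasis f g 0 T.val := by
  refine (of_card_eq_of_exchange (P := fun T ↦ T.card = j + 2 ∧ IsPartialBasis f g 0 T.val)
    (fun T ⟨hT, hPB⟩ x hx z hz ↦ ?_) (hT₀.trans hT.symm) ⟨hT₀, hPB⟩).2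
  have hTx : (T.erase x).card = j + 1 := by rw [Finset.card_erase_of_mem hx, hT]; rfl
  obtain ⟨y, hy⟩ := Finset.card_pos.1 (j.succ_pos.trans_eq hTx.symm)
  set S := (T.erase x).erase y with hSdef
  have hS : S.card = j := by rw [Finset.card_erase_of_mem hy, hTx]; rfl
  have hTx' : (T.erase x).val = y ::ₘ S.val := by
    rw [← Finset.insert_erase hy, Finset.insert_val_of_notMem (Finset.notMem_erase y _)]
  have hz' : z ∉ T.erase x := fun h ↦ hz (Finset.mem_of_mem_erase h)
  rw [← Finset.insert_erase hx, Finset.insert_val_of_notMem (Finset.notMem_erase x _), hTx'] at hPB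
  refine ⟨by rw [Finset.card_insert_of_notMem hz', hTx], ?_⟩
  rw [Finset.insert_val_of_notMem hz', hTx']
  have hrig := isPartialBasis_and_eq_neg_one_of_mulVec_eq_zero h (by rwa [Finset.card_val, hS])
    (hv _ hS) hv₁ hvneg hPB
  exact (hrig.2 z fun hzS ↦ hz' (Finset.mem_of_mem_erase hzS)).2 y (Finset.notMem_erase y _)
    fun hzy ↦ hz' (hzy ▸ hy)

theorem forall_isPartialBasis_and_forall_eq_neg_one (h : IsRankQuotient f g)
    (hcard : a + j + 2 = Fintype.card Z) (hv : ∀ S : Multiset Z, S.card = j →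
      hess varExponent (basisCoeff f g) w 0 (a, S) *ᵥ v = 0)
    (hv₁ : v none = 1) (hvneg : ∀ x, v (some x) < 0)
    (hT : ∀ T : Finset Z, T.card = j + 2 → IsPartialBasis f g 0 T.val) :
    (∀ S : Finset Z, S.card = j → IsPartialBasis f g 0 S.val) ∧ ∀ x, v (some x) = -1 := by
  have hrig (S : Finset Z) (hS : S.card = j) :
      IsPartialBasis f g 0 S.val ∧ ∀ x ∉ S, v (some x) = -1 := by
    obtain ⟨y, hy⟩ : ∃ y, y ∉ S := by
      simpa [Finset.eq_univ_iff_forall] using (Finset.card_lt_iff_ne_univ S).1 (by omega)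
    have hyS := Finset.card_insert_of_notMem hy
    obtain ⟨x, hx⟩ : ∃ x, x ∉ insert y S := by
      simpa [Finset.eq_univ_iff_forall] using (Finset.card_lt_iff_ne_univ (insert y S)).1 (by omega)
    have hxy := hT _ (by rw [Finset.card_insert_of_notMem hx, hyS, hS])
    rw [Finset.insert_val_of_notMem hx, Finset.insert_val_of_notMem hy] at hxy
    have := isPartialBasis_and_eq_neg_one_of_mulVec_eq_zero h (by rwa [Finset.card_val, hS])
      (hv _ hS) hv₁ hvneg hxy
    exact ⟨this.1, fun x hx ↦ (this.2 x hx).1⟩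
  refine ⟨fun S hS ↦ (hrig S hS).1, fun x ↦ ?_⟩
  obtain ⟨S, hSx, hS⟩ := Finset.exists_subset_card_eq (s := Finset.univ.erase x) (n := j)
    (by rw [Finset.card_erase_of_mem (Finset.mem_univ x), Finset.card_univ]; omega)
  exact (hrig S hS).2 x fun hx ↦ Finset.notMem_erase x _ (hSx hx)

end GlobalRigidity

section BasisCount

open Matrix

variable {Z : Type*} [Fintype Z] [DecidableEq Z]

theorem sum_powersetCard_sum_compl_insert {M : Type*} [AddCommMonoid M] (i : ℕ)
    (h : Finset Z → M) :
    ∑ S ∈ Finset.univ.powersetCard i, ∑ x ∈ Sᶜ, h (insert x S) =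
      (i + 1) • ∑ T ∈ Finset.univ.powersetCard (i + 1), h T := by
  calc ∑ S ∈ Finset.univ.powersetCard i, ∑ x ∈ Sᶜ, h (insert x S)
      = ∑ T ∈ Finset.univ.powersetCard (i + 1), ∑ _x ∈ T, h T := by
        rw [Finset.sum_sigma', Finset.sum_sigma']
        refine Finset.sum_bij' (fun p _ ↦ ⟨insert p.2 p.1, p.2⟩) (fun p _ ↦ ⟨p.1.erase p.2, p.2⟩)
          ?_ ?_ ?_ ?_ fun _ _ ↦ rfl
        · simp +contextual [Finset.card_insert_of_notMem]
        · simp +contextual [Finset.card_erase_of_mem]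
        · simp +contextual
        · simp +contextual [Finset.insert_erase]
    _ = (i + 1) • ∑ T ∈ Finset.univ.powersetCard (i + 1), h T := by
        rw [Finset.smul_sum]
        refine Finset.sum_congr rfl fun T hT ↦ ?_
        rw [Finset.sum_const, (Finset.mem_powersetCard.1 hT).2]

variable {f g : Finset Z → ℕ} {ω : Z → ℝ}

theorem prod_mul_iterDeriv_basisCoeff_succ (h : IsRankQuotient f g) (hω : ∀ x, 0 < ω x) (a r : ℕ)
    (S : Finset Z) : (∏ x ∈ S, ω x) *
      iterDeriv varExponent (basisCoeff f g) (evalPoint ω) (r + 1) (a, S.val) =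
    ∑ x ∈ Sᶜ, (∏ y ∈ insert x S, ω y) *
      iterDeriv varExponent (basisCoeff f g) (evalPoint ω) r (a, (insert x S).val) := by
  have hw := evalPoint_nonneg fun x ↦ (hω x).le
  have hrepeat (x : Z) (hx : x ∈ S) :
      iterDeriv varExponent (basisCoeff f g) (evalPoint ω) r (a, x ::ₘ S.val) = 0 := by
    by_contra hne
    have hbasis := ((iterDeriv_basisCoeff_ne_zero_iff h hw hω r a _).1 hne).1
    exact (Multiset.nodup_cons.1 (hbasis.nodup h.left)).1 hx
  rw [iterDeriv, Fintype.sum_option, evalPoint, Option.elim, zero_mul, zero_add, Finset.mul_sum,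
    ← Finset.sum_subset Sᶜ.subset_univ fun x _ hx ↦ by
      rw [add_varExponent_some, hrepeat x (by simpa using hx), mul_zero, mul_zero]]
  refine Finset.sum_congr rfl fun x hx ↦ ?_
  rw [Finset.mem_compl] at hx
  rw [add_varExponent_some, Finset.insert_val_of_notMem hx, Finset.prod_insert hx, evalPoint,
    Option.elim]
  ring

theorem factorial_mul_sum_iterDeriv_basisCoeff (h : IsRankQuotient f g) (hω : ∀ x, 0 < ω x)
    (a r i : ℕ) : i.factorial * ∑ S ∈ Finset.univ.powersetCard i, (∏ x ∈ S, ω x) *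
      iterDeriv varExponent (basisCoeff f g) (evalPoint ω) r (a, S.val) =
    (i + r).factorial * ∑ T ∈ Finset.univ.powersetCard (i + r), (∏ x ∈ T, ω x) *
      basisCoeff f g (a, T.val) := by
  induction r generalizing i with
  | zero => rfl
  | succ r ih =>
    simp only [prod_mul_iterDeriv_basisCoeff_succ h hω]
    rw [sum_powersetCard_sum_compl_insert i fun S ↦ (∏ y ∈ S, ω y) *
        iterDeriv varExponent (basisCoeff f g) (evalPoint ω) r (a, S.val),
      nsmul_eq_mul, mul_left_comm, ← mul_assoc, ← Nat.cast_mul, ← Nat.factorial_succ, ih,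
      Nat.add_right_comm, add_assoc]

theorem iterDeriv_basisCoeff_zero_right (h : IsRankQuotient f g) (hω : ∀ x, 0 < ω x) (r a : ℕ) :
    iterDeriv varExponent (basisCoeff f g) (evalPoint ω) r (a, 0) =
      r.factorial * a.factorial *
        ∑ T with IsPartialBasis f g 0 T.val ∧ T.card = r, ∏ x ∈ T, ω x := by
  have hsum := factorial_mul_sum_iterDeriv_basisCoeff h hω a r 0
  simp only [Finset.powersetCard_zero, Finset.sum_singleton, Finset.prod_empty, one_mul,
    Finset.empty_val, Nat.factorial_zero, Nat.cast_one, zero_add] at hsum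
  have hfilter : ({T | IsPartialBasis f g 0 T.val ∧ T.card = r} : Finset (Finset Z)) =
      {T ∈ (Finset.univ : Finset Z).powersetCard r | IsPartialBasis f g 0 T.val} := by
    ext T
    simp [and_comm]
  rw [hsum, hfilter, Finset.sum_filter, Finset.mul_sum, Finset.mul_sum]
  refine Finset.sum_congr rfl fun T _ ↦ ?_
  rw [basisCoeff]
  split_ifs <;> ring

end BasisCount

section EqualityCase

open Matrix

variable {Z : Type*} [Fintype Z] [DecidableEq Z] {f g : Finset Z → ℕ} {ω : Z → ℝ} {a j : ℕ}

theorem exists_mulVec_eq_zero_of_sq_eq (h : IsRankQuotient f g) (hω : ∀ x, 0 < ω x)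
    (hcard : a + j + 2 = Fintype.card Z)
    (hpos : 0 < iterDeriv varExponent (basisCoeff f g) (evalPoint ω) (j + 1) (a + 1, 0))
    (heq : iterDeriv varExponent (basisCoeff f g) (evalPoint ω) (j + 1) (a + 1, 0) ^ 2 =
      iterDeriv varExponent (basisCoeff f g) (evalPoint ω) j (a + 2, 0) *
        iterDeriv varExponent (basisCoeff f g) (evalPoint ω) (j + 2) (a, 0)) :
    ∃ lam > 0, hess varExponent (basisCoeff f g) (evalPoint ω) j (a, 0) *ᵥ
      (Option.elim · 1 fun x ↦ -(lam * ω x)) = 0 := by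
  set w := evalPoint ω
  have hw : ∀ p, 0 ≤ w p := evalPoint_nonneg fun x ↦ (hω x).le
  set H := hess varExponent (basisCoeff f g) w j (a, 0)
  set t : Option Z → ℝ := Pi.single none 1
  have htw : H.toBilin' t w = iterDeriv varExponent (basisCoeff f g) w (j + 1) (a + 1, 0) := by
    rw [toBilin'_apply', single_one_dotProduct, hess_mulVec_self, add_varExponent_none]
  have htt : H.toBilin' t t = iterDeriv varExponent (basisCoeff f g) w j (a + 2, 0) := by
    rw [toBilin'_single]
    simp only [H, hess, of_apply, add_varExponent_none, add_varExponent_none]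
  have hww : H.toBilin' w w = iterDeriv varExponent (basisCoeff f g) w (j + 2) (a, 0) := by
    rw [toBilin'_apply', dotProduct_hess_mulVec_self]
  rw [← htw] at hpos
  rw [← htw, ← htt, ← hww] at heq
  have hwpos : 0 < H.toBilin' w w := by
    have hnonneg : 0 ≤ H.toBilin' w w := hww ▸ iterDeriv_nonneg basisCoeff_nonneg hw _ _
    refine hnonneg.lt_of_ne' fun hzero ↦ ?_
    rw [hzero, mul_zero] at heq
    exact (pow_pos hpos 2).ne' heq
  refine ⟨H.toBilin' t w / H.toBilin' w w, div_pos hpos hwpos, ?_⟩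
  have hhyp : IsHyperbolicAt H.toBilin' w :=
    isHyperbolicAt_hess_basisCoeff h hw j (by simpa using hcard)
  have hH : H.IsSymm := hess_isSymm w j (a, 0)
  convert mulVec_eq_zero_of_toBilin' hH <|
    hhyp.apply_sub_smul_eq_zero (isSymm_toBilin'_iff_isSymm.2 hH) hwpos heq
  rename_i p
  cases p <;> simp [t, w, evalPoint]

theorem iterDeriv_basisCoeff_zero_right_of_uniform (h : IsRankQuotient f g)
    (hω : ∀ x, 0 < ω x) {c : ℝ} (hc : ∀ x, ω x = c) {r : ℕ} (hcard : r + a = Fintype.card Z)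
    (hall : ∀ S : Finset Z, S.card = r → IsPartialBasis f g 0 S.val) :
    iterDeriv varExponent (basisCoeff f g) (evalPoint ω) r (a, 0) =
      (Fintype.card Z).factorial * c ^ r := by
  have hfilter : ({T | IsPartialBasis f g 0 T.val ∧ T.card = r} : Finset (Finset Z)) =
      Finset.univ.powersetCard r := by
    ext T
    simpa using hall T
  have hprod : ∀ T ∈ Finset.univ.powersetCard r, ∏ x ∈ T, ω x = c ^ r := fun T hT ↦ by
    rw [Finset.prod_congr rfl fun x _ ↦ hc x, Finset.prod_const, (Finset.mem_powersetCard.1 hT).2]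
  rw [iterDeriv_basisCoeff_zero_right h hω, hfilter, Finset.sum_congr rfl hprod, Finset.sum_const,
    Finset.card_powersetCard, Finset.card_univ, nsmul_eq_mul, ← hcard,
    ← Nat.add_choose_mul_factorial_mul_factorial r a, Nat.choose_symm_add]
  push_cast
  ring

theorem forall_isPartialBasis_of_sq_eq (h : IsRankQuotient f g) (hω : ∀ x, 0 < ω x)
    (hcard : a + j + 2 = Fintype.card Z) (hrank : j + 2 ≤ f Finset.univ)
    (hpos : 0 < iterDeriv varExponent (basisCoeff f g) (evalPoint ω) (j + 1) (a + 1, 0))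
    (heq : iterDeriv varExponent (basisCoeff f g) (evalPoint ω) (j + 1) (a + 1, 0) ^ 2 =
      iterDeriv varExponent (basisCoeff f g) (evalPoint ω) j (a + 2, 0) *
        iterDeriv varExponent (basisCoeff f g) (evalPoint ω) (j + 2) (a, 0)) :
    (∀ T : Finset Z, T.card = j + 2 → IsPartialBasis f g 0 T.val) ∧
      (∀ S : Finset Z, S.card = j → IsPartialBasis f g 0 S.val) ∧ ∀ x y, ω x = ω y := by
  obtain ⟨lam, hlam, hker⟩ := exists_mulVec_eq_zero_of_sq_eq h hω hcard hpos heq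
  have hneg (x : Z) : -(lam * ω x) < 0 := neg_neg_of_pos (mul_pos hlam (hω x))
  have hker₀ (S : Multiset Z) (hS : S.card = j) : hess varExponent (basisCoeff f g) (evalPoint ω) 0
      (a, S) *ᵥ (Option.elim · 1 fun x ↦ -(lam * ω x)) = 0 :=
    hess_basisCoeff_mulVec_eq_zero h hω (by omega) (by omega) (by rwa [hS])
  obtain ⟨T₀, hT₀⟩ : ∃ T₀ : Finset Z, IsPartialBasis f g 0 T₀.val ∧ T₀.card = j + 2 := by
    have hne := right_ne_zero_of_mul (heq ▸ (pow_pos hpos 2).ne')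
    rw [iterDeriv_basisCoeff_zero_right h hω] at hne
    obtain ⟨T₀, hT₀, -⟩ := Finset.exists_ne_zero_of_sum_ne_zero (right_ne_zero_of_mul hne)
    exact ⟨T₀, (Finset.mem_filter.1 hT₀).2⟩
  have hT (T : Finset Z) := isPartialBasis_of_mulVec_eq_zero h hcard hker₀ rfl hneg hT₀.2 hT₀.1
    (T := T)
  obtain ⟨hS, hv⟩ := forall_isPartialBasis_and_forall_eq_neg_one h hcard hker₀ rfl hneg hT
  exact ⟨hT, hS, fun x y ↦ mul_left_cancel₀ hlam.ne' (neg_injective ((hv x).trans (hv y).symm))⟩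

theorem isPartialBasis_of_card_eq_succ (h : IsRankQuotient f g) (hcard : j + 2 ≤ Fintype.card Z)
    (hT : ∀ T : Finset Z, T.card = j + 2 → IsPartialBasis f g 0 T.val)
    (hS : ∀ S : Finset Z, S.card = j → IsPartialBasis f g 0 S.val) {S : Finset Z}
    (hSj : S.card = j + 1) : IsPartialBasis f g 0 S.val := by
  obtain ⟨T, hST, hTj⟩ := Finset.exists_superset_card_eq (s := S) (n := j + 2) (by omega) hcard
  obtain ⟨R, hRS, hRj⟩ := Finset.exists_subset_card_eq (s := S) (n := j) (by omega)
  obtain ⟨x, hx, rfl⟩ : ∃ x ∉ S, insert x S = T :=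
    Finset.exists_eq_insert_iff.2 ⟨hST, by omega⟩
  have hxS := hT _ hTj
  rw [Finset.insert_val_of_notMem hx, IsPartialBasis.cons_iff h.left] at hxS
  refine ⟨hxS.1, (hS R hRj).2.trans ?_⟩
  simpa using h.right.mono hRS

theorem sq_iterDeriv_basisCoeff_eq_iff (h : IsRankQuotient f g) (hω : ∀ x, 0 < ω x)
    (hcard : a + j + 2 = Fintype.card Z) (hrank : j + 2 ≤ f Finset.univ)
    (hpos : 0 < iterDeriv varExponent (basisCoeff f g) (evalPoint ω) (j + 1) (a + 1, 0)) :
    iterDeriv varExponent (basisCoeff f g) (evalPoint ω) (j + 1) (a + 1, 0) ^ 2 =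
      iterDeriv varExponent (basisCoeff f g) (evalPoint ω) j (a + 2, 0) *
        iterDeriv varExponent (basisCoeff f g) (evalPoint ω) (j + 2) (a, 0) ↔
    (∀ T : Finset Z, T.card = j + 2 → IsPartialBasis f g 0 T.val) ∧
      (∀ S : Finset Z, S.card = j → IsPartialBasis f g 0 S.val) ∧ ∀ x y, ω x = ω y := by
  refine ⟨forall_isPartialBasis_of_sq_eq h hω hcard hrank hpos, fun ⟨hT, hS, huniform⟩ ↦ ?_⟩
  obtain ⟨x₀⟩ : Nonempty Z := Fintype.card_pos_iff.1 (by omega)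
  have hc (x : Z) := huniform x x₀
  rw [iterDeriv_basisCoeff_zero_right_of_uniform h hω hc (by omega) hS,
    iterDeriv_basisCoeff_zero_right_of_uniform h hω hc (by omega) hT,
    iterDeriv_basisCoeff_zero_right_of_uniform h hω hc (by omega)
      fun S ↦ isPartialBasis_of_card_eq_succ h (by omega) hT hS]
  ring

end EqualityCase

section MorphismBases

variable {V W : Type*} [DecidableEq W] [Fintype W]
  {I : Finset V → Prop} {J : Finset W → Prop} {Φ : V → W}

theorem IsPhiBasis.mono (hJ : IsMatroid J) {S T : Finset V} (hS : IsPhiBasis I J Φ S)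
    (hST : S ⊆ T) (hT : I T) : IsPhiBasis I J Φ T := by
  have hmono := hJ.isRankFunction_rkOf.mono
  exact ⟨hT, (hmono (Finset.subset_univ _)).antisymm
    (hS.2.ge.trans (hmono (Finset.image_subset_image hST)))⟩

variable [Fintype V]

theorem IsPhiBasis.rkOf_image_univ (hJ : IsMatroid J) {S : Finset V} (hS : IsPhiBasis I J Φ S) :
    rkOf J (Finset.univ.image Φ) = rkOf J Finset.univ := by
  have hmono := hJ.isRankFunction_rkOf.mono
  exact (hmono (Finset.subset_univ _)).antisymm
    (hS.2.ge.trans (hmono (Finset.image_subset_image S.subset_univ)))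

theorem exists_isPhiBasis_of_Bw_pos {ω : V → ℝ} {k : ℕ} (h : 0 < Bw I J Φ ω k) :
    ∃ S, IsPhiBasis I J Φ S := by
  obtain ⟨S, hS, -⟩ := Finset.exists_ne_zero_of_sum_ne_zero h.ne'
  exact ⟨S, (Finset.mem_filter.1 hS).2.1⟩

variable [DecidableEq V]

theorem isPartialBasis_zero_iff_isPhiBasis (hI : IsMatroid I) (hJ : IsMatroid J)
    (hfull : rkOf J (Finset.univ.image Φ) = rkOf J Finset.univ) {S : Finset V} :
    IsPartialBasis (rkOf I) (fun S ↦ rkOf J (S.image Φ)) 0 S.val ↔ IsPhiBasis I J Φ S := by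
  have hle := hJ.isRankFunction_rkOf.mono (Finset.subset_univ (S.image Φ))
  rw [IsPartialBasis, IsPhiBasis, Finset.val_toFinset, Finset.card_val, hI.rkOf_eq_card_iff,
    hfull, add_zero, hle.ge_iff_eq]

theorem iterDeriv_basisCoeff_rkOf (hI : IsMatroid I) (hJ : IsMatroid J) (hΦ : IsMorphism I J Φ)
    (hfull : rkOf J (Finset.univ.image Φ) = rkOf J Finset.univ) {ω : V → ℝ} (hω : ∀ x, 0 < ω x)
    (r a : ℕ) :
    iterDeriv varExponent (basisCoeff (rkOf I) fun S ↦ rkOf J (S.image Φ)) (evalPoint ω) r (a, 0) =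
      r.factorial * a.factorial * Bw I J Φ ω r := by
  rw [iterDeriv_basisCoeff_zero_right (hΦ.isRankQuotient hI hJ) hω, Bw]
  simp only [isPartialBasis_zero_iff_isPhiBasis hI hJ hfull]

theorem forall_isPhiBasis_iff (hI : IsMatroid I) (hJ : IsMatroid J) {i j : ℕ} (hij : i ≤ j)
    (hj : j ≤ Fintype.card V) :
    ((∀ T : Finset V, T.card = j → IsPhiBasis I J Φ T) ∧
      ∀ S : Finset V, S.card = i → IsPhiBasis I J Φ S) ↔
    (∀ T : Finset V, T.card = j → I T) ∧
      ∀ S : Finset V, I S → S.card = i → rkOf J (S.image Φ) = rkOf J Finset.univ := by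
  refine ⟨fun ⟨hT, hS⟩ ↦ ⟨fun T h ↦ (hT T h).1, fun S _ h ↦ (hS S h).2⟩, fun ⟨hT, hS⟩ ↦ ?_⟩
  have hbasis (S : Finset V) (h : S.card = i) : IsPhiBasis I J Φ S := by
    obtain ⟨T, hST, h'⟩ := Finset.exists_superset_card_eq (h.trans_le hij) hj
    have hIS := hI.2.1 S T hST (hT T h')
    exact ⟨hIS, hS S hIS h⟩
  refine ⟨fun T h ↦ ?_, hbasis⟩
  obtain ⟨S, hST, h'⟩ := Finset.exists_subset_card_eq (hij.trans_eq h.symm)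
  exact (hbasis S h').mono hJ hST (hT T h)

end MorphismBases

theorem sq_eq_one_add_one_div_mul_iff (j a : ℕ) (b₀ b₁ b₂ : ℝ) :
    b₁ ^ 2 = (1 + 1 / ((j : ℝ) + 1)) * (1 + 1 / ((a : ℝ) + 1)) * b₀ * b₂ ↔
      ((j + 1).factorial * (a + 1).factorial * b₁) ^ 2 =
        (j.factorial * (a + 2).factorial * b₀) * ((j + 2).factorial * a.factorial * b₂) := by
  have hpos : (0 : ℝ) < (j + 1).factorial * (a + 1).factorial := by positivity
  rw [← mul_right_inj' (pow_ne_zero 2 hpos.ne')]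
  simp only [Nat.factorial_succ]
  push_cast
  field_simp

/-- **Equality conditions for morphisms of matroids.**  Suppose `B_ω(k) > 0`.  Then equality
holds in the log-concavity inequality for morphisms if and only if every `(k+1)`-subset of
`X` is independent in `M`, the weight function `ω` is uniform, and `g(Φ(S)) = rk(N)` for
every independent set `S` of `M` of size `k-1`. -/
theorem morphism_equality
    (IndepM : Finset X → Prop) (IndepN : Finset Y → Prop) (Φ : X → Y)
    (hM : IsMatroid IndepM) (hN : IsMatroid IndepN)
    (hΦ : IsMorphism IndepM IndepN Φ)
    (ω : X → ℝ) (hω : ∀ x, 0 < ω x)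
    (k : ℕ) (hk1 : 1 ≤ k) (hk2 : k < rkOf IndepM (Finset.univ : Finset X))
    (hBpos : 0 < Bw IndepM IndepN Φ ω k) :
    (Bw IndepM IndepN Φ ω k) ^ 2 =
        ((1 : ℝ) + 1 / (k : ℝ)) * (1 + 1 / ((Fintype.card X : ℝ) - (k : ℝ))) *
          Bw IndepM IndepN Φ ω (k - 1) * Bw IndepM IndepN Φ ω (k + 1) ↔
      (∀ S : Finset X, S.card = k + 1 → IndepM S) ∧
        (∀ x y : X, ω x = ω y) ∧
        (∀ S : Finset X, IndepM S → S.card = k - 1 →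
          rkOf IndepN (S.image Φ) = rkOf IndepN (Finset.univ : Finset Y)) := by
  obtain ⟨j, rfl⟩ : ∃ j, k = j + 1 := ⟨k - 1, by omega⟩
  have hrank := hM.isRankFunction_rkOf.le_card Finset.univ
  obtain ⟨a, hcard⟩ : ∃ a, a + j + 2 = Fintype.card X :=
    ⟨Fintype.card X - j - 2, by rw [Finset.card_univ] at hrank; omega⟩
  obtain ⟨S, hS⟩ := exists_isPhiBasis_of_Bw_pos hBpos
  have hfull := hS.rkOf_image_univ hN
  have hiter := iterDeriv_basisCoeff_rkOf hM hN hΦ hfull hω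
  have hpos := mul_pos (by positivity : (0 : ℝ) < (j + 1).factorial * (a + 1).factorial) hBpos
  have hsub : (Fintype.card X : ℝ) - (j + 1 : ℕ) = a + 1 := by
    rw [← hcard]
    push_cast
    ring
  rw [← hiter] at hpos
  rw [hsub, Nat.cast_succ, Nat.add_sub_cancel, sq_eq_one_add_one_div_mul_iff, ← hiter, ← hiter,
    ← hiter, sq_iterDeriv_basisCoeff_eq_iff (hΦ.isRankQuotient hM hN) hω hcard hk2 hpos,
    and_left_comm (b := ∀ x y, ω x = ω y),
    ← forall_isPhiBasis_iff hM hN (by omega : j ≤ j + 1 + 1) (by omega)]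
  simp only [isPartialBasis_zero_iff_isPhiBasis hM hN hfull]
  tauto
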